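/- Let ẑ be the spectral clustering with r = κ components. Assume βn/k² ≥ 10, ρ₀ := λ_κ/‖E‖ > 16, and ψ₀ := Δ/(β^{−1/2} k n^{−1/2} ‖E‖) ≥ 16, and let φ be the bijection of [k] with ℓ(ẑ,z*) = (1/n)|{i : ẑ_i ≠ φ(z*_i)}|. Then there is a universal constant C > 0 such that for every i ∈ [n]: 𝟙{ẑ_i ≠ φ(z*_i)} ≤ 𝟙{ (1 − C(ψ₀^{−1} + ρ₀^{−2})) Δ ≤ 2‖Û_{−i,1:κ} Û_{−i,1:κ}ᵀ ε_i‖ }. Consequently, if the ε_i are random, E ℓ(ẑ,z*) ≤ n^{−1} Σ_{i∈[n]} P( (1 − C(ψ₀^{−1} + ρ₀^{−2})) Δ ≤ 2‖Û_{−i,1:κ} Û_{−i,1:κ}ᵀ ε_i‖ ). -/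

import Mathlib

open Matrix MeasureTheory ProbabilityTheory
open scoped BigOperators ENNReal NNReal

noncomputable section

/-- Euclidean norm of a vector in `Fin p → ℝ`. -/
def vnorm {p : ℕ} (x : Fin p → ℝ) : ℝ := Real.sqrt (∑ i, (x i) ^ 2)

/-- Frobenius norm of a real matrix. -/
def fnorm {m n : ℕ} (A : Matrix (Fin m) (Fin n) ℝ) : ℝ :=
  Real.sqrt (∑ i, ∑ j, (A i j) ^ 2)

/-- Operator (spectral) norm of a real matrix. -/
def opnorm {m n : ℕ} (A : Matrix (Fin m) (Fin n) ℝ) : ℝ :=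
  ‖LinearMap.toContinuousLinearMap (Matrix.toEuclideanLin A)‖

/-- A (full) singular value decomposition of a real `p × n` matrix `A`:
`A = U D Vᵀ` with `U, V` orthogonal and `D` the rectangular diagonal matrix with the
nonincreasing nonnegative singular values `sv 0 ≥ sv 1 ≥ ⋯` on the diagonal
(0-indexed, so the math `σ_i` is `sv (i-1)`), extended by zero beyond `min p n`. -/
structure SVDData (p n : ℕ) (A : Matrix (Fin p) (Fin n) ℝ) where
  U : Matrix (Fin p) (Fin p) ℝ
  V : Matrix (Fin n) (Fin n) ℝ
  sv : ℕ → ℝ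
  hU : Uᵀ * U = 1
  hV : Vᵀ * V = 1
  sv_anti : ∀ i j : ℕ, i ≤ j → sv j ≤ sv i
  sv_nonneg : ∀ i, 0 ≤ sv i
  sv_zero : ∀ j, min p n ≤ j → sv j = 0
  decomp : A = U * (Matrix.of fun (i : Fin p) (j : Fin n) => if (i : ℕ) = (j : ℕ) then sv (i : ℕ) else 0) * Vᵀ

/-- Projection matrix `U_{1:r} U_{1:r}ᵀ` onto the span of the first `r` columns of `U`. -/
def projr {p : ℕ} (U : Matrix (Fin p) (Fin p) ℝ) (r : ℕ) : Matrix (Fin p) (Fin p) ℝ :=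
  Matrix.of fun i j => ∑ l : Fin p, if (l : ℕ) < r then U i l * U j l else 0

/-- The `l`-th (0-indexed) column of a matrix, as a vector. -/
def matCol {p q : ℕ} (U : Matrix (Fin p) (Fin q) ℝ) (l : ℕ) : Fin p → ℝ :=
  fun i => if h : l < q then U i ⟨l, h⟩ else 0

/-- `β` for a cluster assignment: `(k/n) ·` (size of the smallest cluster),
so that `β·n/k` is the size of the smallest cluster. -/
def betaMin (n k : ℕ) (z : Fin n → Fin k) : ℝ :=
  ((k : ℝ) / n) * ⨅ a : Fin k, ((Finset.univ.filter fun i => z i = a).card : ℝ)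

/-- Minimum pairwise distance between the centers. -/
def Delta {p k : ℕ} (θ : Fin k → Fin p → ℝ) : ℝ :=
  ⨅ q : {q : Fin k × Fin k // q.1 ≠ q.2}, vnorm (fun i => θ q.1.1 i - θ q.1.2 i)

/-- Misclustering error `ℓ(z, z*)`. -/
def miscl {n k : ℕ} (z zs : Fin n → Fin k) : ℝ :=
  (⨅ φ : Equiv.Perm (Fin k), ((Finset.univ.filter fun i => z i ≠ φ (zs i)).card : ℝ)) / n

/-- `(z, c)` is a global minimizer of the k-means objective for the columns of `W * X`. -/
def IsKMeans {p n k : ℕ} (W : Matrix (Fin p) (Fin p) ℝ) (X : Matrix (Fin p) (Fin n) ℝ)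
    (z : Fin n → Fin k) (c : Fin k → Fin p → ℝ) : Prop :=
  ∀ (z' : Fin n → Fin k) (c' : Fin k → Fin p → ℝ),
    ∑ i, ∑ a, (W.mulVec (fun b => X b i) a - c (z i) a) ^ 2 ≤
      ∑ i, ∑ a, (W.mulVec (fun b => X b i) a - c' (z' i) a) ^ 2

/-!
Write `Δ = ψ₀ τ`. The signal has rank `κ`, so the centres nearly lie in the span of `Û_{1:κ}`;
hence the k-means centres are within `O(τ)` of the true ones, and a misclassified `i` satisfies
`Δ ≤ 2 ‖Û Ûᵀ ε_i‖ + O(τ)`.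

It remains to replace `Û` by `Û_{-i}`. Deleting the column `X_i` changes the Gram operator `X Xᵀ`
by the rank one term `X_i X_iᵀ`, so a Davis–Kahan argument bounds `‖Û Ûᵀ (1 - Û_{-i} Û_{-i}ᵀ)‖` by
`‖(1 - Û_{-i} Û_{-i}ᵀ) X_i‖ · ‖V̂ᵀ e_i‖ / σ_κ(X)`, up to a constant. The first factor is `O(‖E‖)`,
because another point of the cluster of `i` remains in `X_{-i}`. For the second, `X` acts on
`e_i - 𝟙_a / |a|`, with `a` the cluster of `i`, as pure noise, so `‖V̂ᵀ e_i‖` is at most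
`(‖Û Ûᵀ ε_i‖ + ‖E‖ / √|a|) / σ_κ(X) + 1 / √|a|`. The quantity `‖Û Ûᵀ ε_i‖` thus reappears on the
right, but with a factor `O(ρ₀⁻²)`, and is absorbed.
-/

section EuclideanOperators

variable {p q r : ℕ}

/-- The continuous linear map between Euclidean spaces given by a real matrix; its norm is
`opnorm`. -/
def euclideanOp (A : Matrix (Fin p) (Fin q) ℝ) :
    EuclideanSpace ℝ (Fin q) →L[ℝ] EuclideanSpace ℝ (Fin p) :=
  LinearMap.toContinuousLinearMap (Matrix.toEuclideanLin A)

lemma opnorm_eq_norm_euclideanOp (A : Matrix (Fin p) (Fin q) ℝ) : opnorm A = ‖euclideanOp A‖ :=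
  rfl

lemma euclideanOp_toLp (A : Matrix (Fin p) (Fin q) ℝ) (y : Fin q → ℝ) :
    euclideanOp A (WithLp.toLp 2 y) = WithLp.toLp 2 (A *ᵥ y) :=
  rfl

lemma euclideanOp_mul (A : Matrix (Fin p) (Fin q) ℝ) (B : Matrix (Fin q) (Fin r) ℝ)
    (y : EuclideanSpace ℝ (Fin r)) :
    euclideanOp (A * B) y = euclideanOp A (euclideanOp B y) :=
  congrArg (WithLp.toLp 2) (Matrix.mulVec_mulVec y.ofLp A B).symm

lemma euclideanOp_sub (A B : Matrix (Fin p) (Fin q) ℝ) :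
    euclideanOp (A - B) = euclideanOp A - euclideanOp B := by
  ext1 y
  exact congrArg (WithLp.toLp 2) (Matrix.sub_mulVec A B y.ofLp)

lemma euclideanOp_single (A : Matrix (Fin p) (Fin q) ℝ) (j : Fin q) :
    euclideanOp A (EuclideanSpace.single j 1) = WithLp.toLp 2 (A.col j) :=
  congrArg (WithLp.toLp 2) (Matrix.mulVec_single_one A j)

lemma euclideanOp_transpose (A : Matrix (Fin p) (Fin q) ℝ) :
    euclideanOp Aᵀ = (euclideanOp A).adjoint := by
  rw [← Matrix.conjTranspose_eq_transpose_of_trivial]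
  exact congrArg LinearMap.toContinuousLinearMap (Matrix.toEuclideanLin_conjTranspose_eq_adjoint A)

lemma vnorm_eq_norm (x : Fin p → ℝ) : vnorm x = ‖(WithLp.toLp 2 x : EuclideanSpace ℝ (Fin p))‖ := by
  simp only [vnorm, EuclideanSpace.norm_eq, Real.norm_eq_abs, sq_abs]

lemma orthonormal_toLp_col {U : Matrix (Fin p) (Fin p) ℝ} (hU : Uᵀ * U = 1) :
    Orthonormal ℝ fun j => (WithLp.toLp 2 (U.col j) : EuclideanSpace ℝ (Fin p)) := by
  rw [orthonormal_iff_ite]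
  intro i j
  rw [EuclideanSpace.inner_toLp_toLp, ← Matrix.one_apply, ← hU, Matrix.mul_apply, star_trivial,
    dotProduct_comm]
  rfl

/-- The orthonormal basis formed by the columns of an orthogonal matrix. -/
def columnBasis (U : Matrix (Fin p) (Fin p) ℝ) (hU : Uᵀ * U = 1) :
    OrthonormalBasis (Fin p) ℝ (EuclideanSpace ℝ (Fin p)) :=
  OrthonormalBasis.mk (orthonormal_toLp_col hU) <| by
    rw [(orthonormal_toLp_col hU).linearIndependent.span_eq_top_of_card_eq_finrank' (by simp)]

lemma columnBasis_apply (U : Matrix (Fin p) (Fin p) ℝ) (hU : Uᵀ * U = 1) (l : Fin p) :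
    columnBasis U hU l = WithLp.toLp 2 (U.col l) := by
  simp only [columnBasis, OrthonormalBasis.coe_mk]

end EuclideanOperators

section LeadingSpan

lemma exists_mem_orthogonal_of_finrank_lt {E : Type*} [NormedAddCommGroup E]
    [InnerProductSpace ℝ E] {K L : Submodule ℝ E} [FiniteDimensional ℝ K] [FiniteDimensional ℝ L]
    (h : Module.finrank ℝ K < Module.finrank ℝ L) : ∃ y ∈ L, y ∈ Kᗮ ∧ y ≠ 0 := by
  obtain ⟨y, hyker, hy⟩ := Submodule.exists_mem_ne_zero_of_ne_bot <|
    LinearMap.ker_ne_bot_of_finrank_lt (f := K.orthogonalProjectionOnto.toLinearMap ∘ₗ L.subtype) h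
  refine ⟨y, y.2, ?_, fun h0 => hy (Subtype.ext h0)⟩
  exact Submodule.orthogonalProjectionOnto_eq_zero_iff.1 hyker

variable {E : Type*} [NormedAddCommGroup E] [InnerProductSpace ℝ E] {q : ℕ}

/-- The span of the first `r` vectors of an orthonormal basis. -/
def leadingSpan (b : OrthonormalBasis (Fin q) ℝ E) (r : ℕ) : Submodule ℝ E :=
  Submodule.span ℝ (b '' {l | (l : ℕ) < r})

variable (b : OrthonormalBasis (Fin q) ℝ E) {r : ℕ}

instance : FiniteDimensional ℝ (leadingSpan b r) :=
  FiniteDimensional.span_of_finite ℝ (Set.toFinite _)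

variable {b}

lemma basis_mem_leadingSpan {l : Fin q} (hl : (l : ℕ) < r) : b l ∈ leadingSpan b r :=
  Submodule.subset_span (Set.mem_image_of_mem b hl)

lemma basis_mem_leadingSpan_orthogonal {l : Fin q} (hl : r ≤ l) : b l ∈ (leadingSpan b r)ᗮ := by
  refine Submodule.isOrtho_span.2 ?_ (Submodule.mem_span_singleton_self (b l))
  rintro _ rfl _ ⟨m, hm, rfl⟩
  exact b.inner_eq_zero fun h => (h ▸ hl).not_gt hm

lemma inner_eq_zero_of_mem_leadingSpan {y : E} (hy : y ∈ leadingSpan b r) {l : Fin q}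
    (hl : r ≤ l) : inner ℝ (b l) y = 0 :=
  (leadingSpan b r).inner_left_of_mem_orthogonal hy (basis_mem_leadingSpan_orthogonal hl)

lemma inner_eq_zero_of_mem_leadingSpan_orthogonal {y : E} (hy : y ∈ (leadingSpan b r)ᗮ)
    {l : Fin q} (hl : (l : ℕ) < r) : inner ℝ (b l) y = 0 :=
  (leadingSpan b r).inner_right_of_mem_orthogonal (basis_mem_leadingSpan hl) hy

lemma starProjection_leadingSpan_basis (l : Fin q) :
    (leadingSpan b r).starProjection (b l) = if (l : ℕ) < r then b l else 0 := by
  split_ifs with hl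
  · exact Submodule.starProjection_eq_self_iff.2 (basis_mem_leadingSpan hl)
  · exact ((leadingSpan b r).starProjection_apply_eq_zero_iff).2
      (basis_mem_leadingSpan_orthogonal (not_lt.1 hl))

lemma starProjection_leadingSpan (x : E) :
    (leadingSpan b r).starProjection x =
      ∑ l : Fin q, if (l : ℕ) < r then inner ℝ (b l) x • b l else 0 := by
  conv_lhs => rw [← b.sum_repr' x]
  simp only [map_sum, map_smul, starProjection_leadingSpan_basis, smul_ite, smul_zero]

lemma finrank_leadingSpan : Module.finrank ℝ (leadingSpan b r) = min q r := by
  have hb : LinearIndepOn ℝ b (Finset.univ.filter fun l : Fin q => (l : ℕ) < r) :=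
    b.orthonormal.linearIndependent.linearIndepOn _
  classical
  have hspan : leadingSpan b r =
      Submodule.span ℝ ((Finset.univ.filter fun l : Fin q => (l : ℕ) < r).image b : Finset E) := by
    simp [leadingSpan]
  rw [hspan, finrank_span_finset_eq_card, Finset.card_image_of_injective, Fin.card_filter_val_lt]
  · exact b.toBasis.injective
  · simpa using hb.id_image

end LeadingSpan

section SingularPair

variable {E F : Type*} [NormedAddCommGroup E] [InnerProductSpace ℝ E] [CompleteSpace E]
  [NormedAddCommGroup F] [InnerProductSpace ℝ F] [CompleteSpace F]

/-- `L` and `K` are matching spans of leading right and left singular vectors of `A`, with the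
singular values on `L` at least `σ` and the remaining ones at most `τ`. -/
structure IsSingularPair (A : F →L[ℝ] E) (L : Submodule ℝ F) (K : Submodule ℝ E)
    [L.HasOrthogonalProjection] [K.HasOrthogonalProjection] (σ τ : ℝ) : Prop where
  comm : ∀ y, A (L.starProjection y) = K.starProjection (A y)
  lower : ∀ ⦃y⦄, y ∈ L → σ * ‖y‖ ≤ ‖A y‖
  adjoint_lower : ∀ ⦃w⦄, w ∈ K → σ * ‖w‖ ≤ ‖A.adjoint w‖
  upper : ∀ ⦃y⦄, y ∈ Lᗮ → ‖A y‖ ≤ τ * ‖y‖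

namespace IsSingularPair

variable {A : F →L[ℝ] E} {L : Submodule ℝ F} {K : Submodule ℝ E}
  [L.HasOrthogonalProjection] [K.HasOrthogonalProjection] {σ τ : ℝ}

lemma adjoint_comm (h : IsSingularPair A L K σ τ) (w : E) :
    A.adjoint (K.starProjection w) = L.starProjection (A.adjoint w) := by
  refine ext_inner_right ℝ fun y => ?_
  rw [A.adjoint_inner_left, K.inner_starProjection_left_eq_right, ← h.comm,
    ← A.adjoint_inner_left, L.inner_starProjection_left_eq_right]

lemma comm_orthogonal (h : IsSingularPair A L K σ τ) (y : F) :
    A (Lᗮ.starProjection y) = Kᗮ.starProjection (A y) := by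
  simp only [Submodule.starProjection_orthogonal_val, map_sub, h.comm]

lemma norm_starProjection_orthogonal_apply_le (h : IsSingularPair A L K σ τ) (y : F) :
    ‖Kᗮ.starProjection (A y)‖ ≤ τ * ‖Lᗮ.starProjection y‖ := by
  rw [← h.comm_orthogonal]
  exact h.upper (Lᗮ.starProjection_apply_mem y)

lemma mul_norm_starProjection_le (h : IsSingularPair A L K σ τ) (y : F) :
    σ * ‖L.starProjection y‖ ≤ ‖K.starProjection (A y)‖ := by
  rw [← h.comm]
  exact h.lower (L.starProjection_apply_mem y)

lemma adjoint_mem_orthogonal (h : IsSingularPair A L K σ τ) {g : E} (hg : g ∈ Kᗮ) :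
    A.adjoint g ∈ Lᗮ := by
  rw [← L.starProjection_apply_eq_zero_iff, ← h.adjoint_comm,
    K.starProjection_apply_eq_zero_iff.2 hg, map_zero]

lemma apply_mem_orthogonal (h : IsSingularPair A L K σ τ) {y : F} (hy : y ∈ Lᗮ) :
    A y ∈ Kᗮ := by
  rw [← K.starProjection_apply_eq_zero_iff, ← h.comm, L.starProjection_apply_eq_zero_iff.2 hy,
    map_zero]

lemma norm_apply_adjoint_le (h : IsSingularPair A L K σ τ) {g : E} (hg : g ∈ Kᗮ) :
    ‖A (A.adjoint g)‖ ≤ τ ^ 2 * ‖g‖ := by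
  have hle : ‖A (A.adjoint g)‖ ≤ τ * ‖A.adjoint g‖ := h.upper (h.adjoint_mem_orthogonal hg)
  have hsq : ‖A.adjoint g‖ ^ 2 ≤ ‖A (A.adjoint g)‖ * ‖g‖ := by
    rw [← real_inner_self_eq_norm_sq, A.adjoint_inner_right]
    exact real_inner_le_norm _ _
  rcases (norm_nonneg (A.adjoint g)).eq_or_lt with h0 | hpos
  · rw [← h0, mul_zero] at hle
    exact hle.trans (by positivity)
  have hτ : 0 ≤ τ := nonneg_of_mul_nonneg_left ((norm_nonneg _).trans hle) hpos
  have hadj : ‖A.adjoint g‖ ≤ τ * ‖g‖ := by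
    refine le_of_mul_le_mul_left ?_ hpos
    calc ‖A.adjoint g‖ * ‖A.adjoint g‖ = ‖A.adjoint g‖ ^ 2 := (sq _).symm
      _ ≤ τ * ‖A.adjoint g‖ * ‖g‖ := hsq.trans (by gcongr)
      _ = ‖A.adjoint g‖ * (τ * ‖g‖) := by ring
  calc ‖A (A.adjoint g)‖ ≤ τ * (τ * ‖g‖) := hle.trans (by gcongr)
    _ = τ ^ 2 * ‖g‖ := by ring

section LeaveOneOut

variable {F' : Type*} [NormedAddCommGroup F'] [InnerProductSpace ℝ F'] [CompleteSpace F']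
  {A' : F' →L[ℝ] E} {L' : Submodule ℝ F'} {K' : Submodule ℝ E} [L'.HasOrthogonalProjection]
  [K'.HasOrthogonalProjection] {σ' τ' : ℝ}

/- For `g ∈ K'ᗮ` the vector `y = A†(P_K g) - ⟪A δ, g⟫ P_L δ` lies in `L` and is mapped by `A` to
`P_K (A' A'† g)`, whose norm is at most `‖P_K P_K'ᗮ‖ τ'² ‖g‖`. -/
lemma sq_mul_norm_starProjection_le (h : IsSingularPair A L K σ τ)
    (h' : IsSingularPair A' L' K' σ' τ') (hσ : 0 ≤ σ) {δ : F}
    (hgram : ∀ w, A (A.adjoint w) = A' (A'.adjoint w) + inner ℝ (A δ) w • A δ)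
    {g : E} (hg : g ∈ K'ᗮ) :
    σ ^ 2 * ‖K.starProjection g‖ ≤
      ‖K.starProjection ∘L K'ᗮ.starProjection‖ * (τ' ^ 2 * ‖g‖) +
        σ * (‖K'ᗮ.starProjection (A δ)‖ * ‖g‖ * ‖L.starProjection δ‖) := by
  set c := inner ℝ (A δ) g
  set y := L.starProjection (A.adjoint g) - c • L.starProjection δ with hydef
  have hy : y ∈ L :=
    sub_mem (L.starProjection_apply_mem _) (L.smul_mem c (L.starProjection_apply_mem δ))
  have hAg' : A' (A'.adjoint g) ∈ K'ᗮ := h'.apply_mem_orthogonal (h'.adjoint_mem_orthogonal hg)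
  have hAy : A y = (K.starProjection ∘L K'ᗮ.starProjection) (A' (A'.adjoint g)) := by
    rw [ContinuousLinearMap.comp_apply, Submodule.starProjection_eq_self_iff.2 hAg', hydef,
      map_sub, map_smul, h.comm, h.comm, hgram, map_add, map_smul, add_sub_cancel_right]
  have hc : |c| ≤ ‖K'ᗮ.starProjection (A δ)‖ * ‖g‖ := by
    have hcK : c = inner ℝ (K'ᗮ.starProjection (A δ)) g := by
      rw [K'ᗮ.inner_starProjection_left_eq_right, Submodule.starProjection_eq_self_iff.2 hg]
    exact hcK ▸ abs_real_inner_le_norm _ _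
  have hnorm : ‖L.starProjection (A.adjoint g)‖ ≤ ‖y‖ + |c| * ‖L.starProjection δ‖ := by
    rw [← Real.norm_eq_abs, ← norm_smul]
    simpa [y] using norm_add_le y (c • L.starProjection δ)
  calc σ ^ 2 * ‖K.starProjection g‖ = σ * (σ * ‖K.starProjection g‖) := by ring
    _ ≤ σ * (‖y‖ + |c| * ‖L.starProjection δ‖) := by
        gcongr
        rw [← h.adjoint_comm] at hnorm
        exact (h.adjoint_lower (K.starProjection_apply_mem g)).trans hnorm
    _ ≤ ‖A y‖ + σ * (‖K'ᗮ.starProjection (A δ)‖ * ‖g‖ * ‖L.starProjection δ‖) := by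
        rw [mul_add]
        gcongr
        exact h.lower hy
    _ ≤ _ := by
        rw [hAy]
        gcongr
        refine (ContinuousLinearMap.le_opNorm _ _).trans ?_
        gcongr
        exact h'.norm_apply_adjoint_le hg

lemma norm_starProjection_comp_orthogonal_le (h : IsSingularPair A L K σ τ)
    (h' : IsSingularPair A' L' K' σ' τ') (hσ : 0 < σ) {δ : F}
    (hgram : ∀ w, A (A.adjoint w) = A' (A'.adjoint w) + inner ℝ (A δ) w • A δ) :
    (σ ^ 2 - τ' ^ 2) * ‖K.starProjection ∘L K'ᗮ.starProjection‖ ≤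
      σ * (‖K'ᗮ.starProjection (A δ)‖ * ‖L.starProjection δ‖) := by
  set T := K.starProjection ∘L K'ᗮ.starProjection
  set d := ‖K'ᗮ.starProjection (A δ)‖
  set e := ‖L.starProjection δ‖
  have hT : ‖T‖ ≤ (‖T‖ * τ' ^ 2 + σ * (d * e)) / σ ^ 2 := by
    refine T.opNorm_le_bound (by positivity) fun w => ?_
    have hw := h.sq_mul_norm_starProjection_le h' hσ.le hgram (K'ᗮ.starProjection_apply_mem w)
    rw [div_mul_eq_mul_div, le_div_iff₀ (by positivity), mul_comm]
    calc σ ^ 2 * ‖T w‖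
        ≤ (‖T‖ * τ' ^ 2 + σ * (d * e)) * ‖K'ᗮ.starProjection w‖ := hw.trans_eq (by ring)
      _ ≤ (‖T‖ * τ' ^ 2 + σ * (d * e)) * ‖w‖ := by
          gcongr
          exact K'ᗮ.norm_starProjection_apply_le w
  rw [le_div_iff₀ (by positivity)] at hT
  linarith

end LeaveOneOut

end IsSingularPair

end SingularPair

namespace SVDData

variable {p q : ℕ} {A : Matrix (Fin p) (Fin q) ℝ} (D : SVDData p q A)

/-- The left singular vectors, i.e. the columns of `U`. -/
def leftBasis : OrthonormalBasis (Fin p) ℝ (EuclideanSpace ℝ (Fin p)) :=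
  columnBasis D.U D.hU

/-- The right singular vectors, i.e. the columns of `V`. -/
def rightBasis : OrthonormalBasis (Fin q) ℝ (EuclideanSpace ℝ (Fin q)) :=
  columnBasis D.V D.hV

/-- The singular value decomposition `Aᵀ = V Dᵀ Uᵀ` of the transpose. -/
def transpose : SVDData q p Aᵀ where
  U := D.V
  V := D.U
  sv := D.sv
  hU := D.hV
  hV := D.hU
  sv_anti := D.sv_anti
  sv_nonneg := D.sv_nonneg
  sv_zero j hj := D.sv_zero j (min_comm p q ▸ hj)
  decomp := by
    conv_lhs => rw [D.decomp]
    rw [Matrix.transpose_mul, Matrix.transpose_mul, Matrix.transpose_transpose, Matrix.mul_assoc]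
    congr 2
    ext i j
    by_cases hij : (i : ℕ) = j
    · simp only [Matrix.transpose_apply, Matrix.of_apply, hij]
    · simp only [Matrix.transpose_apply, Matrix.of_apply, hij, Ne.symm hij, if_false]

lemma mul_right_eq : A * D.V =
    D.U * Matrix.of fun (i : Fin p) (j : Fin q) => if (i : ℕ) = j then D.sv i else 0 :=
  (congrArg (· * D.V) D.decomp).trans <| by rw [Matrix.mul_assoc, D.hV, Matrix.mul_one]

lemma apply_rightBasis (l : Fin q) :
    euclideanOp A (D.rightBasis l) =
      if h : (l : ℕ) < p then D.sv l • D.leftBasis ⟨l, h⟩ else 0 := by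
  have hcol : euclideanOp A (D.rightBasis l) = WithLp.toLp 2 ((A * D.V).col l) := by
    rw [rightBasis, columnBasis_apply, ← euclideanOp_single, ← euclideanOp_mul, euclideanOp_single]
  rw [hcol, mul_right_eq]
  ext a
  simp only [Matrix.col_apply, Matrix.mul_apply, Matrix.of_apply, mul_ite, mul_zero]
  split_ifs with h
  · rw [Fintype.sum_eq_single ⟨l, h⟩ fun b hb => if_neg fun hbl => hb (Fin.ext hbl), if_pos rfl,
      leftBasis, columnBasis_apply, mul_comm]
    rfl
  · exact Finset.sum_eq_zero fun b _ => if_neg fun hbl : (b : ℕ) = l => h (hbl ▸ b.isLt)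

lemma adjoint_apply_leftBasis (l : Fin p) :
    (euclideanOp A).adjoint (D.leftBasis l) =
      if h : (l : ℕ) < q then D.sv l • D.rightBasis ⟨l, h⟩ else 0 := by
  rw [← euclideanOp_transpose]
  exact D.transpose.apply_rightBasis l

lemma adjoint_apply_apply_rightBasis (l : Fin q) :
    (euclideanOp A).adjoint (euclideanOp A (D.rightBasis l)) = D.sv l ^ 2 • D.rightBasis l := by
  rw [apply_rightBasis]
  split_ifs with h
  · rw [map_smul, adjoint_apply_leftBasis, dif_pos l.isLt, smul_smul, sq]
  · rw [map_zero, D.sv_zero l (by omega), sq, zero_mul, zero_smul]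

lemma norm_apply_sq (y : EuclideanSpace ℝ (Fin q)) :
    ‖euclideanOp A y‖ ^ 2 =
      ∑ l : Fin q, D.sv l ^ 2 * inner ℝ (D.rightBasis l) y ^ 2 := by
  rw [← real_inner_self_eq_norm_sq, ← ContinuousLinearMap.adjoint_inner_right]
  nth_rewrite 2 [← D.rightBasis.sum_repr' y]
  simp only [map_sum, map_smul, adjoint_apply_apply_rightBasis, inner_sum, inner_smul_right,
    real_inner_comm y]
  exact Finset.sum_congr rfl fun l _ => by ring

lemma starProjection_leftSpan_comm (r : ℕ) (y : EuclideanSpace ℝ (Fin q)) :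
    (leadingSpan D.leftBasis r).starProjection (euclideanOp A y) =
      euclideanOp A ((leadingSpan D.rightBasis r).starProjection y) := by
  suffices h : (leadingSpan D.leftBasis r).starProjection ∘L euclideanOp A =
      euclideanOp A ∘L (leadingSpan D.rightBasis r).starProjection from
    DFunLike.congr_fun h y
  refine ContinuousLinearMap.coe_injective (D.rightBasis.toBasis.ext fun l => ?_)
  simp only [OrthonormalBasis.coe_toBasis, ContinuousLinearMap.coe_coe,
    ContinuousLinearMap.comp_apply, apply_rightBasis, starProjection_leadingSpan_basis]
  split_ifs with h hr hr <;>
    simp only [map_smul, map_zero, starProjection_leadingSpan_basis, hr, if_true, if_false,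
      apply_rightBasis, h, dif_pos, dif_neg, smul_zero, not_false_eq_true]

lemma euclideanOp_projr (r : ℕ) :
    euclideanOp (projr D.U r) = (leadingSpan D.leftBasis r).starProjection := by
  ext w a
  rw [starProjection_leadingSpan]
  simp only [leftBasis, columnBasis_apply, WithLp.ofLp_sum, Finset.sum_apply]
  change ∑ b, (∑ l : Fin p, if (l : ℕ) < r then D.U a l * D.U b l else 0) * w b = _
  simp only [Finset.sum_mul]
  rw [Finset.sum_comm]
  refine Finset.sum_congr rfl fun l _ => ?_
  split_ifs with hl
  · simp only [PiLp.inner_apply, PiLp.smul_apply, smul_eq_mul, Matrix.col_apply,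
      RCLike.inner_apply, Real.ringHom_apply, Finset.sum_mul]
    exact Finset.sum_congr rfl fun b _ => by ring
  · simp

lemma sv_mul_norm_le_of_mem {r : ℕ} {y : EuclideanSpace ℝ (Fin q)}
    (hy : y ∈ leadingSpan D.rightBasis r) : D.sv (r - 1) * ‖y‖ ≤ ‖euclideanOp A y‖ := by
  refine le_of_sq_le_sq ?_ (norm_nonneg _)
  rw [mul_pow, D.norm_apply_sq, ← D.rightBasis.sum_sq_inner_right, Finset.mul_sum]
  refine Finset.sum_le_sum fun l _ => ?_
  rcases lt_or_ge (l : ℕ) r with hl | hl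
  · have hsv : D.sv (r - 1) ≤ D.sv l := D.sv_anti l (r - 1) (by omega)
    have hsv0 := D.sv_nonneg (r - 1)
    gcongr
  · simp [inner_eq_zero_of_mem_leadingSpan hy hl]

lemma norm_apply_le_of_mem_orthogonal {r : ℕ} {y : EuclideanSpace ℝ (Fin q)}
    (hy : y ∈ (leadingSpan D.rightBasis r)ᗮ) : ‖euclideanOp A y‖ ≤ D.sv r * ‖y‖ := by
  have hsvr := D.sv_nonneg r
  refine le_of_sq_le_sq ?_ (by positivity)
  rw [mul_pow, D.norm_apply_sq, ← D.rightBasis.sum_sq_inner_right, Finset.mul_sum]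
  refine Finset.sum_le_sum fun l _ => ?_
  rcases lt_or_ge (l : ℕ) r with hl | hl
  · simp [inner_eq_zero_of_mem_leadingSpan_orthogonal hy hl]
  · have hsv0 := D.sv_nonneg l
    gcongr
    exact D.sv_anti r l hl

/-- Contains both Weyl's inequality (`t = ‖A - B‖`) and Cauchy interlacing (`t = 0`). -/
lemma sv_le_sv_add {p' : ℕ} {B : Matrix (Fin p') (Fin q) ℝ} (DB : SVDData p' q B) {t : ℝ}
    (ht : 0 ≤ t) (hAB : ∀ y, ‖euclideanOp A y‖ ≤ ‖euclideanOp B y‖ + t * ‖y‖) (j : ℕ) :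
    D.sv j ≤ DB.sv j + t := by
  rcases le_or_gt q j with hj | hj
  · rw [D.sv_zero j ((min_le_right p q).trans hj)]
    exact add_nonneg (DB.sv_nonneg j) ht
  obtain ⟨y, hyA, hyB, hy⟩ :
      ∃ y ∈ leadingSpan D.rightBasis (j + 1), y ∈ (leadingSpan DB.rightBasis j)ᗮ ∧ y ≠ 0 :=
    exists_mem_orthogonal_of_finrank_lt (by simp only [finrank_leadingSpan]; omega)
  have hle : D.sv j * ‖y‖ ≤ (DB.sv j + t) * ‖y‖ :=
    calc D.sv j * ‖y‖ ≤ ‖euclideanOp A y‖ := D.sv_mul_norm_le_of_mem hyA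
      _ ≤ ‖euclideanOp B y‖ + t * ‖y‖ := hAB y
      _ ≤ DB.sv j * ‖y‖ + t * ‖y‖ := by gcongr; exact DB.norm_apply_le_of_mem_orthogonal hyB
      _ = (DB.sv j + t) * ‖y‖ := by ring
  exact le_of_mul_le_mul_right hle (norm_pos_iff.2 hy)

lemma isSingularPair (r : ℕ) :
    IsSingularPair (euclideanOp A) (leadingSpan D.rightBasis r) (leadingSpan D.leftBasis r)
      (D.sv (r - 1)) (D.sv r) where
  comm y := (D.starProjection_leftSpan_comm r y).symm
  lower _ := D.sv_mul_norm_le_of_mem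
  adjoint_lower := by
    rw [← euclideanOp_transpose]
    exact fun _ => D.transpose.sv_mul_norm_le_of_mem
  upper _ := D.norm_apply_le_of_mem_orthogonal

end SVDData

section ClusterSignal

variable {E F ι α : Type*} [NormedAddCommGroup E] [InnerProductSpace ℝ E]
  [NormedAddCommGroup F] [InnerProductSpace ℝ F] [Fintype ι]
  {b : OrthonormalBasis ι ℝ F} {z : ι → α} {θ : α → E} {A N : F →L[ℝ] E}

lemma norm_starProjection_sub_center_sq {K : Submodule ℝ E} [K.HasOrthogonalProjection]
    (hA : ∀ i, A (b i) = θ (z i) + N (b i)) (i : ι) :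
    ‖K.starProjection (A (b i)) - θ (z i)‖ ^ 2 =
      ‖K.starProjection (N (b i))‖ ^ 2 + ‖Kᗮ.starProjection (θ (z i))‖ ^ 2 := by
  rw [K.norm_sq_eq_add_norm_sq_starProjection (K.starProjection (A (b i)) - θ (z i)), hA,
    map_sub, map_sub, Submodule.starProjection_eq_self_iff.2 (K.starProjection_apply_mem _),
    (Kᗮ.starProjection_apply_eq_zero_iff).2
      (K.le_orthogonal_orthogonal (K.starProjection_apply_mem _)),
    map_add, add_sub_cancel_left, zero_sub, norm_neg]

variable (b z) [DecidableEq α]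

/-- The number of indices that `z` assigns to the cluster `a`. -/
def clusterSize (z : ι → α) (a : α) : ℕ :=
  (Finset.univ.filter fun i => z i = a).card

/-- The indicator vector of the cluster `a`, expressed in the orthonormal basis `b`. -/
def clusterIndicator (a : α) : F :=
  ∑ i with z i = a, b i

lemma clusterSize_pos (z : ι → α) (i : ι) : 0 < clusterSize z (z i) :=
  Finset.card_pos.2 ⟨i, Finset.mem_filter.2 ⟨Finset.mem_univ i, rfl⟩⟩

lemma clusterSize_eq_one {z : ι → α} {i : ι} (h : ∀ j ≠ i, z j ≠ z i) :
    clusterSize z (z i) = 1 := by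
  refine Finset.card_eq_one.2 ⟨i, ?_⟩
  ext j
  rw [Finset.mem_filter_univ, Finset.mem_singleton]
  exact ⟨fun hj => not_imp_comm.1 (h j) (not_not.2 hj), fun hj => hj ▸ rfl⟩

lemma sq_le_clusterSize_mul_sq [Fintype α] {z : ι → α} {i : ι} {ε m τ : ℝ}
    (hm : m ≤ clusterSize z (z i)) (hmτ : m * τ ^ 2 = Fintype.card α * ε ^ 2) :
    ε ^ 2 ≤ clusterSize z (z i) * τ ^ 2 :=
  calc ε ^ 2 ≤ Fintype.card α * ε ^ 2 :=
        le_mul_of_one_le_left (sq_nonneg _) (Nat.one_le_cast.2 (Fintype.card_pos_iff.2 ⟨z i⟩))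
    _ ≤ clusterSize z (z i) * τ ^ 2 := by rw [← hmτ]; gcongr

lemma div_sqrt_clusterSize_le [Fintype α] {z : ι → α} {i : ι} {ε m τ : ℝ} (hτ : 0 ≤ τ)
    (hm : m ≤ clusterSize z (z i)) (hmτ : m * τ ^ 2 = Fintype.card α * ε ^ 2) :
    ε / √(clusterSize z (z i)) ≤ τ := by
  have hpos : (0 : ℝ) < clusterSize z (z i) := Nat.cast_pos.2 (clusterSize_pos z i)
  refine le_of_sq_le_sq ?_ hτ
  rw [div_pow, Real.sq_sqrt hpos.le, div_le_iff₀ hpos, mul_comm]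
  exact sq_le_clusterSize_mul_sq hm hmτ

lemma norm_clusterIndicator_sq (a : α) : ‖clusterIndicator b z a‖ ^ 2 = clusterSize z a := by
  have h := b.orthonormal.inner_sum (fun _ => (1 : ℝ)) (fun _ => 1)
    (Finset.univ.filter fun i => z i = a)
  simpa [clusterIndicator, clusterSize] using h

variable {b z}

lemma apply_clusterIndicator (hA : ∀ i, A (b i) = θ (z i) + N (b i)) (a : α) :
    A (clusterIndicator b z a) = (clusterSize z a : ℝ) • θ a + N (clusterIndicator b z a) := by
  have hθ : ∑ i with z i = a, θ (z i) = (clusterSize z a : ℝ) • θ a := by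
    rw [Finset.sum_congr rfl fun i hi => congrArg θ (Finset.mem_filter.1 hi).2, Finset.sum_const,
      clusterSize, Nat.cast_smul_eq_nsmul]
  simp only [clusterIndicator, map_sum, hA, Finset.sum_add_distrib, hθ]

variable [CompleteSpace E] [CompleteSpace F] {L : Submodule ℝ F} {K : Submodule ℝ E}

lemma sum_norm_starProjection_apply_sq_le [FiniteDimensional ℝ K] (b : OrthonormalBasis ι ℝ F)
    (N : F →L[ℝ] E) :
    ∑ i, ‖K.starProjection (N (b i))‖ ^ 2 ≤ Module.finrank ℝ K * ‖N‖ ^ 2 := by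
  let u := stdOrthonormalBasis ℝ K
  have hproj (x : E) : ‖K.starProjection x‖ ^ 2 = ∑ l, inner ℝ (u l : E) x ^ 2 := by
    rw [K.starProjection_apply, Submodule.norm_coe, ← u.sum_sq_inner_right]
    simp only [K.inner_orthogonalProjectionOnto_eq_of_mem_left]
  calc ∑ i, ‖K.starProjection (N (b i))‖ ^ 2 = ∑ l, ‖N.adjoint (u l)‖ ^ 2 := by
        simp only [hproj]
        rw [Finset.sum_comm]
        simp only [← N.adjoint_inner_left, b.sum_sq_inner_left]
    _ ≤ ∑ _l : Fin (Module.finrank ℝ K), ‖N‖ ^ 2 := by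
        gcongr with l
        calc ‖N.adjoint (u l)‖ ≤ ‖N.adjoint‖ * ‖(u l : E)‖ := N.adjoint.le_opNorm _
          _ = ‖N‖ := by
            rw [LinearIsometryEquiv.norm_map, Submodule.norm_coe, u.norm_eq_one, mul_one]
    _ = Module.finrank ℝ K * ‖N‖ ^ 2 := by
        rw [Finset.sum_const, Finset.card_univ, Fintype.card_fin, nsmul_eq_mul]

variable [L.HasOrthogonalProjection] [K.HasOrthogonalProjection] {σ τ : ℝ}

namespace IsSingularPair

lemma clusterSize_mul_norm_starProjection_orthogonal_sq_le (h : IsSingularPair A L K σ τ)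
    (hτ : 0 ≤ τ) (hA : ∀ i, A (b i) = θ (z i) + N (b i)) (a : α) :
    clusterSize z a * ‖Kᗮ.starProjection (θ a)‖ ^ 2 ≤ (τ + ‖N‖) ^ 2 := by
  set v := clusterIndicator b z a
  have hv : ‖v‖ ^ 2 = clusterSize z a := norm_clusterIndicator_sq b z a
  have hθ : ‖v‖ ^ 2 * ‖Kᗮ.starProjection (θ a)‖ ≤ (τ + ‖N‖) * ‖v‖ :=
    calc ‖v‖ ^ 2 * ‖Kᗮ.starProjection (θ a)‖
        = ‖Kᗮ.starProjection (A v) - Kᗮ.starProjection (N v)‖ := by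
          rw [← map_sub, apply_clusterIndicator hA, add_sub_cancel_right, ← hv, map_smul,
            norm_smul, Real.norm_of_nonneg (sq_nonneg _)]
      _ ≤ ‖Kᗮ.starProjection (A v)‖ + ‖Kᗮ.starProjection (N v)‖ := norm_sub_le _ _
      _ ≤ τ * ‖v‖ + ‖N‖ * ‖v‖ := by
          gcongr
          · refine (h.norm_starProjection_orthogonal_apply_le v).trans ?_
            gcongr
            exact Lᗮ.norm_starProjection_apply_le v
          · exact (Kᗮ.norm_starProjection_apply_le _).trans (N.le_opNorm v)
      _ = (τ + ‖N‖) * ‖v‖ := by ring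
  rw [← hv, ← mul_pow]
  gcongr
  rcases (norm_nonneg v).eq_or_lt with h0 | hpos
  · rw [← h0, zero_mul]
    positivity
  · exact le_of_mul_le_mul_right (by linarith [hθ, sq ‖v‖]) hpos

lemma mul_norm_starProjection_basis_le (h : IsSingularPair A L K σ τ) (hσ : 0 ≤ σ)
    (hA : ∀ i, A (b i) = θ (z i) + N (b i)) (i : ι) :
    σ * ‖L.starProjection (b i)‖ ≤
      ‖K.starProjection (N (b i))‖ + (‖N‖ + σ) / √(clusterSize z (z i)) := by
  set v := clusterIndicator b z (z i)
  have hv : ‖v‖ ^ 2 = clusterSize z (z i) := norm_clusterIndicator_sq b z (z i)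
  have hvpos : 0 < ‖v‖ := by
    have hsq : 0 < ‖v‖ ^ 2 := hv ▸ Nat.cast_pos.2 (clusterSize_pos z i)
    exact (norm_nonneg v).lt_of_ne' (sq_pos_iff.1 hsq)
  set w := (‖v‖ ^ 2)⁻¹ • v with hw
  have hwnorm : ‖w‖ = 1 / ‖v‖ := by
    rw [hw, norm_smul, Real.norm_of_nonneg (by positivity)]
    field_simp
  have hAw : A (b i - w) = N (b i - w) := by
    rw [hw, map_sub, map_sub, map_smul, map_smul, apply_clusterIndicator hA, hA, ← hv, smul_add,
      inv_smul_smul₀ (by positivity)]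
    abel
  have hdiff : σ * ‖L.starProjection (b i - w)‖ ≤ ‖K.starProjection (N (b i))‖ + ‖N‖ * ‖w‖ :=
    calc σ * ‖L.starProjection (b i - w)‖ ≤ ‖K.starProjection (N (b i) - N w)‖ := by
          rw [← map_sub, ← hAw]
          exact h.mul_norm_starProjection_le _
      _ ≤ ‖K.starProjection (N (b i))‖ + ‖K.starProjection (N w)‖ := by
          rw [map_sub]
          exact norm_sub_le _ _
      _ ≤ ‖K.starProjection (N (b i))‖ + ‖N‖ * ‖w‖ := by
          gcongr
          exact (K.norm_starProjection_apply_le _).trans (N.le_opNorm w)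
  have htri : ‖L.starProjection (b i)‖ ≤ ‖L.starProjection (b i - w)‖ + ‖w‖ :=
    calc ‖L.starProjection (b i)‖ = ‖L.starProjection (b i - w) + L.starProjection w‖ := by
          rw [← map_add, sub_add_cancel]
      _ ≤ _ := (norm_add_le _ _).trans (by gcongr; exact L.norm_starProjection_apply_le w)
  rw [← hv, Real.sqrt_sq hvpos.le]
  calc σ * ‖L.starProjection (b i)‖
      ≤ ‖K.starProjection (N (b i))‖ + ‖N‖ * ‖w‖ + σ * ‖w‖ := by
        linarith [mul_le_mul_of_nonneg_left htri hσ]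
    _ = ‖K.starProjection (N (b i))‖ + (‖N‖ + σ) / ‖v‖ := by rw [hwnorm]; ring

end IsSingularPair

end ClusterSignal

section KMeans

variable {E ι α : Type*}

lemma exists_perm_eq_of_separates [Finite α] {z z' : ι → α} {S : Finset ι}
    (hcover : ∀ a, ∃ i ∉ S, z i = a) (hsep : ∀ i ∉ S, ∀ j ∉ S, z' i = z' j → z i = z j) :
    ∃ φ : Equiv.Perm α, ∀ i ∉ S, z' i = φ (z i) := by
  choose rep hrepS hrep using hcover
  have hinj : Function.Injective fun a => z' (rep a) := fun a a' h => by
    rw [← hrep a, ← hrep a', hsep _ (hrepS a) _ (hrepS a') h]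
  refine ⟨Equiv.ofBijective _ (Finite.injective_iff_bijective.1 hinj), fun i hi => ?_⟩
  obtain ⟨a, ha : z' (rep a) = z' i⟩ := Finite.surjective_of_injective hinj (z' i)
  have hza : z i = a := (hsep _ hi _ (hrepS a) ha.symm).trans (hrep a)
  rw [hza]
  exact ha.symm

variable [Fintype ι]

/-- The indices whose estimated label differs from their true label relabelled by `φ`. -/
def mislabeled [DecidableEq α] (z' z : ι → α) (φ : Equiv.Perm α) : Finset ι :=
  Finset.univ.filter fun i => z' i ≠ φ (z i)

variable [NormedAddCommGroup E]

/-- The labels `z` and centres `c` minimise the k-means objective of the points `Y`. -/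
def IsKMeansMinimizer (Y : ι → E) (z : ι → α) (c : α → E) : Prop :=
  ∀ (z' : ι → α) (c' : α → E), ∑ i, ‖Y i - c (z i)‖ ^ 2 ≤ ∑ i, ‖Y i - c' (z' i)‖ ^ 2

namespace IsKMeansMinimizer

variable {Y : ι → E} {z z' : ι → α} {c θ : α → E} {m Δ : ℝ}

lemma norm_sub_le (h : IsKMeansMinimizer Y z' c) (i : ι) (a : α) :
    ‖Y i - c (z' i)‖ ≤ ‖Y i - c a‖ := by
  classical
  have hupd := h (Function.update z' i a) c
  rw [← Finset.add_sum_erase _ _ (Finset.mem_univ i),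
    ← Finset.add_sum_erase _ (fun j => ‖Y j - c (Function.update z' i a j)‖ ^ 2)
      (Finset.mem_univ i), Function.update_self,
    Finset.sum_congr rfl fun j hj => by
      rw [← Function.update_of_ne (Finset.ne_of_mem_erase hj) a z']] at hupd
  exact le_of_sq_le_sq (le_of_add_le_add_right hupd) (norm_nonneg _)

lemma sum_norm_center_sub_sq_le (h : IsKMeansMinimizer Y z' c) (z : ι → α) (θ : α → E) :
    ∑ i, ‖c (z' i) - θ (z i)‖ ^ 2 ≤ 4 * ∑ i, ‖Y i - θ (z i)‖ ^ 2 := by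
  have hpt (i : ι) :
      ‖c (z' i) - θ (z i)‖ ^ 2 ≤ 2 * ‖Y i - c (z' i)‖ ^ 2 + 2 * ‖Y i - θ (z i)‖ ^ 2 := by
    have htri := _root_.norm_sub_le (Y i - θ (z i)) (Y i - c (z' i))
    rw [sub_sub_sub_cancel_left] at htri
    nlinarith [sq_nonneg (‖Y i - θ (z i)‖ - ‖Y i - c (z' i)‖), norm_nonneg (c (z' i) - θ (z i))]
  calc ∑ i, ‖c (z' i) - θ (z i)‖ ^ 2
      ≤ 2 * ∑ i, ‖Y i - c (z' i)‖ ^ 2 + 2 * ∑ i, ‖Y i - θ (z i)‖ ^ 2 := by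
        rw [Finset.mul_sum, Finset.mul_sum, ← Finset.sum_add_distrib]
        exact Finset.sum_le_sum fun i _ => hpt i
    _ ≤ 4 * ∑ i, ‖Y i - θ (z i)‖ ^ 2 := by linarith [h z θ]

variable [DecidableEq α]

lemma exists_perm_card_mislabeled_le [Finite α] (h : IsKMeansMinimizer Y z' c)
    (hm : ∀ a, m ≤ clusterSize z a) (hΔ : ∀ a a', a ≠ a' → Δ ≤ ‖θ a - θ a'‖) (hΔ0 : 0 ≤ Δ)
    (hY : 16 * ∑ i, ‖Y i - θ (z i)‖ ^ 2 < m * Δ ^ 2) :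
    ∃ φ : Equiv.Perm α,
      (mislabeled z' z φ).card * Δ ^ 2 ≤ 16 * ∑ i, ‖Y i - θ (z i)‖ ^ 2 := by
  set S := Finset.univ.filter fun i => Δ / 2 ≤ ‖c (z' i) - θ (z i)‖ with hS
  have hSle : S.card * Δ ^ 2 ≤ 16 * ∑ i, ‖Y i - θ (z i)‖ ^ 2 := by
    have hmarkov : S.card * (Δ / 2) ^ 2 ≤ ∑ i, ‖c (z' i) - θ (z i)‖ ^ 2 :=
      calc S.card * (Δ / 2) ^ 2 = ∑ _i ∈ S, (Δ / 2) ^ 2 := by rw [Finset.sum_const, nsmul_eq_mul]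
        _ ≤ ∑ i ∈ S, ‖c (z' i) - θ (z i)‖ ^ 2 := by
            gcongr with i hi
            exact (Finset.mem_filter.1 hi).2
        _ ≤ ∑ i, ‖c (z' i) - θ (z i)‖ ^ 2 :=
            Finset.sum_le_sum_of_subset_of_nonneg S.subset_univ fun i _ _ => sq_nonneg _
    linarith [h.sum_norm_center_sub_sq_le z θ]
  have hSm : (S.card : ℝ) < m := lt_of_mul_lt_mul_right (hSle.trans_lt hY) (sq_nonneg Δ)
  have hcover (a : α) : ∃ i ∉ S, z i = a := by
    have hlt : S.card < clusterSize z a := Nat.cast_lt.1 (hSm.trans_le (hm a))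
    obtain ⟨i, hi, hiS⟩ := Finset.exists_mem_notMem_of_card_lt_card hlt
    exact ⟨i, hiS, (Finset.mem_filter.1 hi).2⟩
  have hsep : ∀ i ∉ S, ∀ j ∉ S, z' i = z' j → z i = z j := fun i hi j hj hij => by
    simp only [hS, Finset.mem_filter, Finset.mem_univ, true_and, not_le] at hi hj
    by_contra hne
    have htri := _root_.norm_sub_le (c (z' j) - θ (z j)) (c (z' i) - θ (z i))
    rw [← hij, sub_sub_sub_cancel_left] at htri
    rw [← hij] at hj
    linarith [hΔ _ _ hne]
  obtain ⟨φ, hφ⟩ := exists_perm_eq_of_separates hcover hsep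
  refine ⟨φ, le_trans ?_ hSle⟩
  gcongr
  intro i hi
  by_contra hiS
  exact (Finset.mem_filter.1 hi).2 (hφ i hiS)

lemma mul_norm_center_sub_sq_le (h : IsKMeansMinimizer Y z' c) {φ : Equiv.Perm α} {a : α}
    (hφ : 2 * (mislabeled z' z φ).card ≤ clusterSize z a) :
    clusterSize z a * ‖c (φ a) - θ a‖ ^ 2 ≤ 8 * ∑ i, ‖Y i - θ (z i)‖ ^ 2 := by
  classical
  set G := (Finset.univ.filter fun i => z i = a) \ mislabeled z' z φ with hG
  have hGcard : (clusterSize z a : ℝ) ≤ 2 * G.card := by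
    have hsdiff : clusterSize z a - (mislabeled z' z φ).card ≤ G.card := Finset.le_card_sdiff _ _
    exact_mod_cast show clusterSize z a ≤ 2 * G.card by omega
  have hGsum : G.card * ‖c (φ a) - θ a‖ ^ 2 ≤ ∑ i, ‖c (z' i) - θ (z i)‖ ^ 2 :=
    calc G.card * ‖c (φ a) - θ a‖ ^ 2 = ∑ i ∈ G, ‖c (z' i) - θ (z i)‖ ^ 2 := by
          rw [← nsmul_eq_mul, ← Finset.sum_const]
          refine Finset.sum_congr rfl fun i hi => ?_
          simp only [hG, mislabeled, Finset.mem_sdiff, Finset.mem_filter, Finset.mem_univ,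
            true_and, not_not] at hi
          rw [hi.2, hi.1]
      _ ≤ ∑ i, ‖c (z' i) - θ (z i)‖ ^ 2 :=
          Finset.sum_le_sum_of_subset_of_nonneg G.subset_univ fun i _ _ => sq_nonneg _
  calc clusterSize z a * ‖c (φ a) - θ a‖ ^ 2 ≤ 2 * G.card * ‖c (φ a) - θ a‖ ^ 2 := by gcongr
    _ ≤ 8 * ∑ i, ‖Y i - θ (z i)‖ ^ 2 := by linarith [h.sum_norm_center_sub_sq_le z θ]

lemma norm_center_sub_le [Finite α] {φ : Equiv.Perm α} {τ : ℝ} (h : IsKMeansMinimizer Y z' c)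
    (hφ : ∀ φ', (mislabeled z' z φ).card ≤ (mislabeled z' z φ').card) (hm0 : 0 < m)
    (hm : ∀ a, m ≤ clusterSize z a) (hΔ : ∀ a a', a ≠ a' → Δ ≤ ‖θ a - θ a'‖) (hτ : 0 ≤ τ)
    (hτΔ : 100 * τ < Δ) (hY : ∑ i, ‖Y i - θ (z i)‖ ^ 2 ≤ 5 * (m * τ ^ 2)) (a : α) :
    ‖c (φ a) - θ a‖ ≤ 7 * τ := by
  have hΔsq : (100 * τ) ^ 2 < Δ ^ 2 := by gcongr
  have hmΔ : m * (100 * τ) ^ 2 < m * Δ ^ 2 := by gcongr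
  have hmτ : 0 ≤ m * τ ^ 2 := by positivity
  obtain ⟨φ₀, hφ₀⟩ :=
    h.exists_perm_card_mislabeled_le hm hΔ (by linarith) (by linarith)
  have hcard : 2 * ((mislabeled z' z φ).card : ℝ) ≤ m := by
    have hle : ((mislabeled z' z φ).card : ℝ) ≤ (mislabeled z' z φ₀).card :=
      Nat.cast_le.2 (hφ φ₀)
    have hmul : 2 * ((mislabeled z' z φ₀).card : ℝ) * Δ ^ 2 ≤ m * Δ ^ 2 := by linarith
    linarith [le_of_mul_le_mul_right hmul ((sq_nonneg _).trans_lt hΔsq)]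
  have hcenter : m * ‖c (φ a) - θ a‖ ^ 2 ≤ m * (7 * τ) ^ 2 :=
    calc m * ‖c (φ a) - θ a‖ ^ 2 ≤ clusterSize z a * ‖c (φ a) - θ a‖ ^ 2 := by
          gcongr
          exact hm a
      _ ≤ 8 * ∑ i, ‖Y i - θ (z i)‖ ^ 2 :=
          h.mul_norm_center_sub_sq_le (by exact_mod_cast hcard.trans (hm a))
      _ ≤ m * (7 * τ) ^ 2 := by linarith
  exact le_of_sq_le_sq (le_of_mul_le_mul_left hcenter hm0) (by positivity)

lemma separation_le_of_mem_mislabeled (h : IsKMeansMinimizer Y z' c) {φ : Equiv.Perm α} {η : ℝ}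
    (hΔ : ∀ a a', a ≠ a' → Δ ≤ ‖θ a - θ a'‖) (hη : ∀ a, ‖c (φ a) - θ a‖ ≤ η) {i : ι}
    (hi : i ∈ mislabeled z' z φ) : Δ ≤ 2 * ‖Y i - θ (z i)‖ + 2 * η := by
  obtain ⟨a, ha⟩ := φ.surjective (z' i)
  have hne : a ≠ z i := fun hza => (Finset.mem_filter.1 hi).2 (hza ▸ ha.symm)
  have hnear : ‖Y i - c (φ a)‖ ≤ ‖Y i - c (φ (z i))‖ := ha ▸ h.norm_sub_le i (φ (z i))
  have htri : ‖Y i - c (φ (z i))‖ ≤ ‖Y i - θ (z i)‖ + ‖c (φ (z i)) - θ (z i)‖ := by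
    simpa using _root_.norm_sub_le (Y i - θ (z i)) (c (φ (z i)) - θ (z i))
  have hθ : ‖θ a - θ (z i)‖ ≤ ‖Y i - θ (z i)‖ + (‖Y i - c (φ a)‖ + ‖c (φ a) - θ a‖) :=
    calc ‖θ a - θ (z i)‖ = ‖(Y i - θ (z i)) - ((Y i - c (φ a)) + (c (φ a) - θ a))‖ := by
          congr 1; abel
      _ ≤ _ := (_root_.norm_sub_le _ _).trans (by gcongr; exact norm_add_le _ _)
  linarith [hΔ a (z i) hne, hη a, hη (z i)]

end IsKMeansMinimizer

end KMeans

section Misclassification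

variable {E F ι α : Type*} [NormedAddCommGroup E] [InnerProductSpace ℝ E] [CompleteSpace E]
  [NormedAddCommGroup F] [InnerProductSpace ℝ F] [CompleteSpace F] [Fintype ι]
  {b : OrthonormalBasis ι ℝ F} {z z' : ι → α} {θ c : α → E} {A N : F →L[ℝ] E}
  {L : Submodule ℝ F} {K : Submodule ℝ E} [L.HasOrthogonalProjection] {σ s m τ Δ : ℝ}
  {φ : Equiv.Perm α}

namespace IsSingularPair

lemma sum_norm_starProjection_sub_center_sq_le [Fintype α] [FiniteDimensional ℝ K]
    (h : IsSingularPair A L K σ s) (hs0 : 0 ≤ s) (hA : ∀ i, A (b i) = θ (z i) + N (b i)) :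
    ∑ i, ‖K.starProjection (A (b i)) - θ (z i)‖ ^ 2 ≤
      Module.finrank ℝ K * ‖N‖ ^ 2 + Fintype.card α * (s + ‖N‖) ^ 2 := by
  classical
  have hfib : ∑ i, ‖Kᗮ.starProjection (θ (z i))‖ ^ 2 =
      ∑ a, clusterSize z a * ‖Kᗮ.starProjection (θ a)‖ ^ 2 := by
    rw [← Finset.sum_fiberwise Finset.univ z]
    refine Finset.sum_congr rfl fun a _ => ?_
    rw [Finset.sum_congr rfl fun i hi => by rw [(Finset.mem_filter.1 hi).2], Finset.sum_const,
      nsmul_eq_mul, clusterSize]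
  calc ∑ i, ‖K.starProjection (A (b i)) - θ (z i)‖ ^ 2
      = ∑ i, ‖K.starProjection (N (b i))‖ ^ 2 +
          ∑ a, clusterSize z a * ‖Kᗮ.starProjection (θ a)‖ ^ 2 := by
        rw [Finset.sum_congr rfl fun i _ => norm_starProjection_sub_center_sq hA i,
          Finset.sum_add_distrib, hfib]
    _ ≤ Module.finrank ℝ K * ‖N‖ ^ 2 + ∑ _a : α, (s + ‖N‖) ^ 2 := by
        gcongr with a
        · exact sum_norm_starProjection_apply_sq_le b N
        · exact h.clusterSize_mul_norm_starProjection_orthogonal_sq_le hs0 hA a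
    _ = Module.finrank ℝ K * ‖N‖ ^ 2 + Fintype.card α * (s + ‖N‖) ^ 2 := by
        rw [Finset.sum_const, Finset.card_univ, nsmul_eq_mul]

variable [DecidableEq α]

lemma norm_starProjection_sub_center_le [K.HasOrthogonalProjection]
    (h : IsSingularPair A L K σ s) (hs0 : 0 ≤ s)
    (hs : s ≤ ‖N‖) (hA : ∀ i, A (b i) = θ (z i) + N (b i)) (hτ : 0 ≤ τ) {i : ι}
    (hτN : ‖N‖ ^ 2 ≤ clusterSize z (z i) * τ ^ 2) :
    ‖K.starProjection (A (b i)) - θ (z i)‖ ≤ ‖K.starProjection (N (b i))‖ + 2 * τ := by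
  have hθ : ‖Kᗮ.starProjection (θ (z i))‖ ^ 2 ≤ (2 * τ) ^ 2 := by
    refine le_of_mul_le_mul_left ?_ (Nat.cast_pos.2 (clusterSize_pos z i) : (0 : ℝ) < _)
    calc clusterSize z (z i) * ‖Kᗮ.starProjection (θ (z i))‖ ^ 2 ≤ (s + ‖N‖) ^ 2 :=
          h.clusterSize_mul_norm_starProjection_orthogonal_sq_le hs0 hA (z i)
      _ ≤ (‖N‖ + ‖N‖) ^ 2 := by gcongr
      _ ≤ clusterSize z (z i) * (2 * τ) ^ 2 := by linarith
  refine le_of_sq_le_sq ?_ (by positivity)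
  rw [norm_starProjection_sub_center_sq hA]
  nlinarith [norm_nonneg (K.starProjection (N (b i)))]

lemma separation_le_of_mem_mislabeled [Fintype α] [FiniteDimensional ℝ K]
    (h : IsSingularPair A L K σ s) (hs0 : 0 ≤ s) (hs : s ≤ ‖N‖)
    (hK : Module.finrank ℝ K ≤ Fintype.card α)
    (hA : ∀ i, A (b i) = θ (z i) + N (b i))
    (hkm : IsKMeansMinimizer (fun i => K.starProjection (A (b i))) z' c)
    (hφ : ∀ φ', (mislabeled z' z φ).card ≤ (mislabeled z' z φ').card) (hm0 : 0 < m)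
    (hm : ∀ a, m ≤ clusterSize z a) (hΔ : ∀ a a', a ≠ a' → Δ ≤ ‖θ a - θ a'‖) (hτ : 0 ≤ τ)
    (hτΔ : 100 * τ < Δ) (hmτ : m * τ ^ 2 = Fintype.card α * ‖N‖ ^ 2) {i : ι}
    (hi : i ∈ mislabeled z' z φ) : Δ ≤ 2 * ‖K.starProjection (N (b i))‖ + 18 * τ := by
  have hsum : ∑ i, ‖K.starProjection (A (b i)) - θ (z i)‖ ^ 2 ≤ 5 * (m * τ ^ 2) :=
    calc ∑ i, ‖K.starProjection (A (b i)) - θ (z i)‖ ^ 2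
        ≤ Module.finrank ℝ K * ‖N‖ ^ 2 + Fintype.card α * (s + ‖N‖) ^ 2 :=
          h.sum_norm_starProjection_sub_center_sq_le hs0 hA
      _ ≤ Fintype.card α * ‖N‖ ^ 2 + Fintype.card α * (‖N‖ + ‖N‖) ^ 2 := by gcongr
      _ = 5 * (m * τ ^ 2) := by rw [hmτ]; ring
  have hcenter := hkm.norm_center_sub_le hφ hm0 hm hΔ hτ hτΔ hsum
  linarith [hkm.separation_le_of_mem_mislabeled hΔ hcenter hi,
    h.norm_starProjection_sub_center_le hs0 hs hA hτ
      (sq_le_clusterSize_mul_sq (hm (z i)) hmτ)]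

end IsSingularPair

end Misclassification

section LeaveOneOut

variable {E F F' α : Type*} [NormedAddCommGroup E] [InnerProductSpace ℝ E] [CompleteSpace E]
  [NormedAddCommGroup F] [InnerProductSpace ℝ F] [CompleteSpace F]
  [NormedAddCommGroup F'] [InnerProductSpace ℝ F'] [CompleteSpace F'] {n : ℕ}
  {b : OrthonormalBasis (Fin (n + 1)) ℝ F} {b' : OrthonormalBasis (Fin n) ℝ F'}
  {A N : F →L[ℝ] E} {A' N' : F' →L[ℝ] E} {i : Fin (n + 1)}

lemma apply_adjoint_eq_sum {ι : Type*} [Fintype ι] (b : OrthonormalBasis ι ℝ F) (A : F →L[ℝ] E)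
    (w : E) : A (A.adjoint w) = ∑ j, inner ℝ (A (b j)) w • A (b j) := by
  conv_lhs => rw [← b.sum_repr' (A.adjoint w)]
  simp only [map_sum, map_smul, A.adjoint_inner_right]

lemma apply_adjoint_eq_add (hdel : ∀ j, A' (b' j) = A (b (i.succAbove j))) (w : E) :
    A (A.adjoint w) = A' (A'.adjoint w) + inner ℝ (A (b i)) w • A (b i) := by
  rw [apply_adjoint_eq_sum b A, apply_adjoint_eq_sum b' A', Fin.sum_univ_succAbove _ i, add_comm]
  simp only [hdel]

lemma norm_adjoint_apply_le (hdel : ∀ j, A' (b' j) = A (b (i.succAbove j))) (w : E) :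
    ‖A'.adjoint w‖ ≤ ‖A.adjoint w‖ := by
  refine le_of_sq_le_sq ?_ (norm_nonneg _)
  rw [← real_inner_self_eq_norm_sq, ← real_inner_self_eq_norm_sq, A.adjoint_inner_right,
    A'.adjoint_inner_right, apply_adjoint_eq_add hdel, inner_add_left, real_inner_smul_left]
  linarith [mul_self_nonneg (inner ℝ (A (b i)) w)]

lemma norm_deletion_le (hdel : ∀ j, A' (b' j) = A (b (i.succAbove j))) : ‖A'‖ ≤ ‖A‖ := by
  rw [← ContinuousLinearMap.adjoint.norm_map A', ← ContinuousLinearMap.adjoint.norm_map A]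
  exact ContinuousLinearMap.opNorm_le_bound _ (norm_nonneg _) fun w =>
    (norm_adjoint_apply_le hdel w).trans (A.adjoint.le_opNorm w)

variable {z : Fin (n + 1) → α} {θ : α → E} {L : Submodule ℝ F}
  {L' : Submodule ℝ F'} {K K' : Submodule ℝ E} [L.HasOrthogonalProjection]
  [L'.HasOrthogonalProjection] [K.HasOrthogonalProjection] [K'.HasOrthogonalProjection]
  {σ σ' s s' τ : ℝ}

namespace IsSingularPair

lemma norm_starProjection_orthogonal_deleted_le (h' : IsSingularPair A' L' K' σ' s')
    (hs0 : 0 ≤ s') (hs : s' ≤ ‖N‖) (hA : ∀ j, A (b j) = θ (z j) + N (b j))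
    (hdelA : ∀ j, A' (b' j) = A (b (i.succAbove j)))
    (hdelN : ∀ j, N' (b' j) = N (b (i.succAbove j))) (hi : ∃ j, z (i.succAbove j) = z i) :
    ‖K'ᗮ.starProjection (A (b i))‖ ≤ 3 * ‖N‖ := by
  classical
  obtain ⟨j, hj⟩ := hi
  set z' := fun j => z (i.succAbove j)
  have hA' (j : Fin n) : A' (b' j) = θ (z' j) + N' (b' j) := by rw [hdelA, hdelN, hA]
  have hθ : ‖K'ᗮ.starProjection (θ (z i))‖ ≤ 2 * ‖N‖ := by
    have hone : (1 : ℝ) ≤ clusterSize z' (z i) := Nat.one_le_cast.2 (hj ▸ clusterSize_pos z' j)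
    refine le_of_sq_le_sq ?_ (by positivity)
    calc ‖K'ᗮ.starProjection (θ (z i))‖ ^ 2
        ≤ clusterSize z' (z i) * ‖K'ᗮ.starProjection (θ (z i))‖ ^ 2 :=
          le_mul_of_one_le_left (sq_nonneg _) hone
      _ ≤ (s' + ‖N'‖) ^ 2 := h'.clusterSize_mul_norm_starProjection_orthogonal_sq_le hs0 hA' (z i)
      _ ≤ (‖N‖ + ‖N‖) ^ 2 := by gcongr; exact norm_deletion_le hdelN
      _ = (2 * ‖N‖) ^ 2 := by ring
  have hN : ‖K'ᗮ.starProjection (N (b i))‖ ≤ ‖N‖ :=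
    (K'ᗮ.norm_starProjection_apply_le _).trans <| by
      simpa only [b.norm_eq_one, mul_one] using N.le_opNorm (b i)
  calc ‖K'ᗮ.starProjection (A (b i))‖
      ≤ ‖K'ᗮ.starProjection (θ (z i))‖ + ‖K'ᗮ.starProjection (N (b i))‖ := by
        rw [hA, map_add]
        exact norm_add_le _ _
    _ ≤ 3 * ‖N‖ := by linarith

variable [DecidableEq α]

lemma norm_starProjection_comp_deleted_le (h : IsSingularPair A L K σ s)
    (h' : IsSingularPair A' L' K' σ' s') (hs0 : 0 ≤ s') (hs : s' ≤ ‖N‖) (hN0 : 0 < ‖N‖)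
    (hσ : 9 * ‖N‖ ≤ σ) (hA : ∀ j, A (b j) = θ (z j) + N (b j))
    (hdelA : ∀ j, A' (b' j) = A (b (i.succAbove j)))
    (hdelN : ∀ j, N' (b' j) = N (b (i.succAbove j))) (hi : ∃ j, z (i.succAbove j) = z i) :
    σ ^ 2 * ‖K.starProjection ∘L K'ᗮ.starProjection‖ ≤
      4 * ‖N‖ * (‖K.starProjection (N (b i))‖ + (‖N‖ + σ) / √(clusterSize z (z i))) := by
  set T := ‖K.starProjection ∘L K'ᗮ.starProjection‖
  set R := ‖K.starProjection (N (b i))‖ + (‖N‖ + σ) / √(clusterSize z (z i))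
  have hσ0 : 0 < σ := by linarith
  have hgap : 3 / 4 * σ ^ 2 ≤ σ ^ 2 - s' ^ 2 := by
    have hsσ : s' ^ 2 ≤ (σ / 9) ^ 2 := by gcongr; linarith
    linarith [sq_nonneg σ]
  have hT : 3 / 4 * σ ^ 2 * T ≤ 3 * ‖N‖ * R :=
    calc 3 / 4 * σ ^ 2 * T ≤ (σ ^ 2 - s' ^ 2) * T := by gcongr
      _ ≤ σ * (‖K'ᗮ.starProjection (A (b i))‖ * ‖L.starProjection (b i)‖) :=
          h.norm_starProjection_comp_orthogonal_le h' hσ0 (apply_adjoint_eq_add hdelA)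
      _ ≤ σ * (3 * ‖N‖ * ‖L.starProjection (b i)‖) := by
          gcongr
          exact h'.norm_starProjection_orthogonal_deleted_le hs0 hs hA hdelA hdelN hi
      _ = 3 * ‖N‖ * (σ * ‖L.starProjection (b i)‖) := by ring
      _ ≤ 3 * ‖N‖ * R := by
          gcongr
          exact h.mul_norm_starProjection_basis_le hσ0.le hA i
  linarith

lemma norm_starProjection_noise_le (h : IsSingularPair A L K σ s)
    (h' : IsSingularPair A' L' K' σ' s') (hs0 : 0 ≤ s') (hs : s' ≤ ‖N‖) (hN0 : 0 < ‖N‖)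
    (hσ : 9 * ‖N‖ ≤ σ) (hA : ∀ j, A (b j) = θ (z j) + N (b j))
    (hdelA : ∀ j, A' (b' j) = A (b (i.succAbove j)))
    (hdelN : ∀ j, N' (b' j) = N (b (i.succAbove j))) (hi : ∃ j, z (i.succAbove j) = z i)
    (hτ : ‖N‖ / √(clusterSize z (z i)) ≤ τ) :
    ‖K.starProjection (N (b i))‖ ≤
      ‖K'.starProjection (N (b i))‖ + τ + 4 * (‖N‖ / σ) ^ 2 * ‖K.starProjection (N (b i))‖ := by
  set T := K.starProjection ∘L K'ᗮ.starProjection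
  set M := √(clusterSize z (z i))
  have hσ0 : 0 < σ := by linarith
  have hr : ‖N‖ / σ ≤ 1 / 9 := by rw [div_le_iff₀ hσ0]; linarith
  have hτ0 : 0 ≤ τ := le_trans (by positivity) hτ
  have hNb : ‖N (b i)‖ ≤ ‖N‖ := by simpa only [b.norm_eq_one, mul_one] using N.le_opNorm (b i)
  have hsplit : ‖K.starProjection (N (b i))‖ ≤ ‖K'.starProjection (N (b i))‖ + ‖T‖ * ‖N‖ :=
    calc ‖K.starProjection (N (b i))‖
        = ‖K.starProjection (K'.starProjection (N (b i))) + T (N (b i))‖ := by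
          rw [ContinuousLinearMap.comp_apply, ← map_add,
            K'.starProjection_add_starProjection_orthogonal]
      _ ≤ ‖K.starProjection (K'.starProjection (N (b i)))‖ + ‖T (N (b i))‖ := norm_add_le _ _
      _ ≤ ‖K'.starProjection (N (b i))‖ + ‖T‖ * ‖N‖ := by
          gcongr
          · exact K.norm_starProjection_apply_le _
          · exact (T.le_opNorm _).trans (by gcongr)
  have hTN : ‖T‖ * ‖N‖ ≤ 4 * (‖N‖ / σ) ^ 2 * (‖K.starProjection (N (b i))‖ + (‖N‖ + σ) / M) := by
    have hT := h.norm_starProjection_comp_deleted_le h' hs0 hs hN0 hσ hA hdelA hdelN hi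
    rw [div_pow, mul_div_assoc', div_mul_eq_mul_div, le_div_iff₀ (by positivity)]
    linarith [mul_le_mul_of_nonneg_right hT (norm_nonneg N)]
  have hrem : 4 * (‖N‖ / σ) ^ 2 * ((‖N‖ + σ) / M) ≤ τ :=
    calc 4 * (‖N‖ / σ) ^ 2 * ((‖N‖ + σ) / M)
        = 4 * (‖N‖ / σ) * (‖N‖ / σ + 1) * (‖N‖ / M) := by field_simp
      _ ≤ 4 * (1 / 9) * (1 / 9 + 1) * τ := by gcongr
      _ ≤ τ := by linarith
  linarith

lemma separation_le_deleted_of_mem_mislabeled [Fintype α] [FiniteDimensional ℝ K]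
    {z' : Fin (n + 1) → α} {c : α → E} {φ : Equiv.Perm α} {m Δ : ℝ}
    (h : IsSingularPair A L K σ s) (h' : IsSingularPair A' L' K' σ' s') (hs0 : 0 ≤ s)
    (hs : s ≤ ‖N‖) (hs'0 : 0 ≤ s') (hs' : s' ≤ ‖N‖) (hN0 : 0 < ‖N‖) (hσ : 9 * ‖N‖ ≤ σ)
    (hK : Module.finrank ℝ K ≤ Fintype.card α) (hA : ∀ j, A (b j) = θ (z j) + N (b j))
    (hdelA : ∀ j, A' (b' j) = A (b (i.succAbove j)))
    (hdelN : ∀ j, N' (b' j) = N (b (i.succAbove j)))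
    (hkm : IsKMeansMinimizer (fun j => K.starProjection (A (b j))) z' c)
    (hφ : ∀ φ', (mislabeled z' z φ).card ≤ (mislabeled z' z φ').card) (hm0 : 0 < m)
    (hm : ∀ a, m ≤ clusterSize z a) (hΔ : ∀ a a', a ≠ a' → Δ ≤ ‖θ a - θ a'‖) (hτ : 0 ≤ τ)
    (hτΔ : 100 * τ < Δ) (hmτ : m * τ ^ 2 = Fintype.card α * ‖N‖ ^ 2)
    (hi : i ∈ mislabeled z' z φ) :
    (1 - 4 * (‖N‖ / σ) ^ 2) * Δ ≤ 2 * ‖K'.starProjection (N (b i))‖ + 20 * τ := by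
  have hsep := h.separation_le_of_mem_mislabeled hs0 hs hK hA hkm hφ hm0 hm hΔ hτ hτΔ hmτ hi
  have hNτ : ‖N‖ / √(clusterSize z (z i)) ≤ τ :=
    div_sqrt_clusterSize_le hτ (hm (z i)) hmτ
  have hcompanion : ∃ j, z (i.succAbove j) = z i := by
    by_contra! halone
    have hne : ∀ j ≠ i, z j ≠ z i := fun j hj => by
      obtain ⟨l, rfl⟩ := Fin.exists_succAbove_eq hj
      exact halone l
    rw [clusterSize_eq_one hne, Nat.cast_one, Real.sqrt_one, div_one] at hNτ
    have hNi : ‖K.starProjection (N (b i))‖ ≤ ‖N‖ :=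
      (K.norm_starProjection_apply_le _).trans <| by
        simpa only [b.norm_eq_one, mul_one] using N.le_opNorm (b i)
    linarith
  have hnoise :=
    h.norm_starProjection_noise_le h' hs'0 hs' hN0 hσ hA hdelA hdelN hcompanion hNτ
  have hr : 4 * (‖N‖ / σ) ^ 2 ≤ 1 := by
    have hr9 : ‖N‖ / σ ≤ 1 / 9 := by rw [div_le_iff₀ (by linarith)]; linarith
    have hσ0 : 0 < σ := by linarith
    calc 4 * (‖N‖ / σ) ^ 2 ≤ 4 * (1 / 9) ^ 2 := by gcongr
      _ ≤ 1 := by norm_num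
  have hmul := mul_le_mul_of_nonneg_left hsep (sub_nonneg.2 hr)
  linarith [mul_nonneg (mul_nonneg zero_le_four (sq_nonneg (‖N‖ / σ))) hτ]

end IsSingularPair

end LeaveOneOut

section Matrices

variable {p n : ℕ} {A : Matrix (Fin p) (Fin (n + 1)) ℝ} {i : Fin (n + 1)}

lemma euclideanOp_submatrix_basisFun (A : Matrix (Fin p) (Fin (n + 1)) ℝ) (i : Fin (n + 1))
    (j : Fin n) :
    euclideanOp (A.submatrix id i.succAbove) (EuclideanSpace.basisFun (Fin n) ℝ j) =
      euclideanOp A (EuclideanSpace.basisFun (Fin (n + 1)) ℝ (i.succAbove j)) := by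
  rw [EuclideanSpace.basisFun_apply, EuclideanSpace.basisFun_apply, euclideanOp_single,
    euclideanOp_single]
  rfl

namespace SVDData

lemma abs_sv_sub_sv_le {q : ℕ} {A B : Matrix (Fin p) (Fin q) ℝ} (DA : SVDData p q A)
    (DB : SVDData p q B) (j : ℕ) : |DA.sv j - DB.sv j| ≤ opnorm (A - B) := by
  have hle (y : EuclideanSpace ℝ (Fin q)) :
      ‖euclideanOp A y - euclideanOp B y‖ ≤ opnorm (A - B) * ‖y‖ := by
    rw [opnorm_eq_norm_euclideanOp, euclideanOp_sub]
    exact (euclideanOp A - euclideanOp B).le_opNorm y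
  rw [abs_sub_le_iff, sub_le_iff_le_add', sub_le_iff_le_add']
  exact ⟨DA.sv_le_sv_add DB (norm_nonneg _) (fun y => (norm_le_norm_add_norm_sub' _ _).trans
      (by gcongr; exact hle y)) j,
    DB.sv_le_sv_add DA (norm_nonneg _) (fun y => (norm_le_norm_add_norm_sub _ _).trans
      (by gcongr; exact hle y)) j⟩

lemma sv_submatrix_succAbove_le (D : SVDData p (n + 1) A)
    (D' : SVDData p n (A.submatrix id i.succAbove)) (j : ℕ) : D'.sv j ≤ D.sv j := by
  have hle := D'.transpose.sv_le_sv_add D.transpose le_rfl (fun w => ?_) j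
  · rwa [add_zero] at hle
  · rw [euclideanOp_transpose, euclideanOp_transpose, zero_mul, add_zero]
    exact norm_adjoint_apply_le (euclideanOp_submatrix_basisFun A i) w

end SVDData

end Matrices

section Scales

variable {n k p : ℕ} {z z' : Fin (n + 1) → Fin k} {θ : Fin k → Fin p → ℝ} {ε : ℝ}

/-- The size of the smallest cluster. -/
def minClusterSize (z : Fin (n + 1) → Fin k) : ℝ :=
  ⨅ a, (clusterSize z a : ℝ)

/-- The scale `β^{-1/2} k n^{-1/2} ε` against which the separation `Δ` is measured in `ψ₀`. -/
def clusterNoiseScale (z : Fin (n + 1) → Fin k) (ε : ℝ) : ℝ :=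
  (√(betaMin (n + 1) k z))⁻¹ * k * (√((n : ℝ) + 1))⁻¹ * ε

lemma minClusterSize_le (z : Fin (n + 1) → Fin k) (a : Fin k) :
    minClusterSize z ≤ clusterSize z a :=
  ciInf_le (Set.finite_range _).bddBelow a

lemma betaMin_mul_card (z : Fin (n + 1) → Fin k) :
    betaMin (n + 1) k z * ((n : ℝ) + 1) = k * minClusterSize z := by
  change (k : ℝ) / (n + 1 : ℕ) * minClusterSize z * ((n : ℝ) + 1) = k * minClusterSize z
  push_cast
  field_simp

lemma minClusterSize_pos (h : 0 < clusterNoiseScale z ε) : 0 < minClusterSize z := by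
  have hβ : 0 < √(betaMin (n + 1) k z) := by
    refine (Real.sqrt_nonneg _).lt_of_ne fun h0 => h.ne' ?_
    rw [clusterNoiseScale, ← h0, _root_.inv_zero, zero_mul, zero_mul, zero_mul]
  have hprod : 0 < (k : ℝ) * minClusterSize z :=
    betaMin_mul_card z ▸ mul_pos (Real.sqrt_pos.1 hβ) n.cast_add_one_pos
  exact pos_of_mul_pos_right hprod k.cast_nonneg

lemma minClusterSize_mul_clusterNoiseScale_sq (h : 0 < minClusterSize z) :
    minClusterSize z * clusterNoiseScale z ε ^ 2 = k * ε ^ 2 := by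
  have hk : (0 : ℝ) < k := Nat.cast_pos.2 (z 0).pos
  have hn : (0 : ℝ) < n + 1 := n.cast_add_one_pos
  have hβ : betaMin (n + 1) k z = k * minClusterSize z / (n + 1) :=
    eq_div_of_mul_eq hn.ne' (betaMin_mul_card z)
  simp only [clusterNoiseScale, mul_pow, inv_pow]
  rw [hβ, Real.sq_sqrt (by positivity), Real.sq_sqrt hn.le]
  field_simp

lemma Delta_nonneg (θ : Fin k → Fin p → ℝ) : 0 ≤ Delta θ :=
  Real.iInf_nonneg fun _ => Real.sqrt_nonneg _

lemma Delta_le_norm_sub (θ : Fin k → Fin p → ℝ) {a a' : Fin k} (h : a ≠ a') :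
    Delta θ ≤ ‖(WithLp.toLp 2 (θ a) : EuclideanSpace ℝ (Fin p)) - WithLp.toLp 2 (θ a')‖ :=
  (ciInf_le (Set.finite_range _).bddBelow
    (⟨(a, a'), h⟩ : {q : Fin k × Fin k // q.1 ≠ q.2})).trans_eq (vnorm_eq_norm _)

lemma card_mislabeled_le_of_miscl_eq {φ : Equiv.Perm (Fin k)}
    (h : miscl z' z = (mislabeled z' z φ).card / ((n : ℝ) + 1)) (φ' : Equiv.Perm (Fin k)) :
    (mislabeled z' z φ).card ≤ (mislabeled z' z φ').card := by
  have hle : miscl z' z ≤ (mislabeled z' z φ').card / ((n : ℝ) + 1) := by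
    rw [miscl, Nat.cast_add_one]
    gcongr
    exact ciInf_le (Set.finite_range _).bddBelow φ'
  rw [h, div_le_div_iff_of_pos_right n.cast_add_one_pos] at hle
  exact_mod_cast hle

end Scales

section SpectralClustering

variable {p n k κ : ℕ} {z zh : Fin (n + 1) → Fin k} {θ c : Fin k → Fin p → ℝ}
  {Pm X : Matrix (Fin p) (Fin (n + 1)) ℝ}

lemma IsKMeans.isKMeansMinimizer {q : ℕ} {W : Matrix (Fin p) (Fin p) ℝ}
    {X : Matrix (Fin p) (Fin q) ℝ} {zh : Fin q → Fin k} (h : IsKMeans W X zh c) :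
    IsKMeansMinimizer
      (fun j => euclideanOp W (euclideanOp X (EuclideanSpace.basisFun (Fin q) ℝ j))) zh
      fun a => WithLp.toLp 2 (c a) := by
  have hdist (j : Fin q) (w : EuclideanSpace ℝ (Fin p)) :
      ‖euclideanOp W (euclideanOp X (EuclideanSpace.basisFun (Fin q) ℝ j)) - w‖ ^ 2 =
        ∑ a, ((W *ᵥ fun b => X b j) a - w a) ^ 2 := by
    rw [EuclideanSpace.basisFun_apply, euclideanOp_single, euclideanOp_toLp,
      EuclideanSpace.real_norm_sq_eq]
    rfl
  intro z' c'
  simp only [hdist]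
  exact h z' fun a => (c' a).ofLp

lemma euclideanOp_basisFun_eq_center_add (hPm : ∀ a j, Pm a j = θ (z j) a) (j : Fin (n + 1)) :
    euclideanOp X (EuclideanSpace.basisFun (Fin (n + 1)) ℝ j) =
      WithLp.toLp 2 (θ (z j)) +
        euclideanOp (X - Pm) (EuclideanSpace.basisFun (Fin (n + 1)) ℝ j) := by
  have hcenter : WithLp.toLp 2 (θ (z j)) =
      euclideanOp Pm (EuclideanSpace.basisFun (Fin (n + 1)) ℝ j) := by
    rw [EuclideanSpace.basisFun_apply, euclideanOp_single]
    ext a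
    exact (hPm a j).symm
  rw [hcenter, euclideanOp_sub, _root_.sub_apply, add_sub_cancel]

lemma Delta_le_of_mislabeled (hPm : ∀ a j, Pm a j = θ (z j) a) (hκ : κ ≤ k)
    (DP : SVDData p (n + 1) Pm) (hDP : DP.sv κ = 0) (DX : SVDData p (n + 1) X)
    (i : Fin (n + 1)) (DXi : SVDData p n (X.submatrix id i.succAbove))
    (hK : IsKMeans (projr DX.U κ) X zh c) {φ : Equiv.Perm (Fin k)}
    (hφ : ∀ φ', (mislabeled zh z φ).card ≤ (mislabeled zh z φ').card)
    (hε : 0 < opnorm (X - Pm)) (hσ : 9 * opnorm (X - Pm) ≤ DX.sv (κ - 1))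
    (hτ : 0 < clusterNoiseScale z (opnorm (X - Pm)))
    (hτΔ : 100 * clusterNoiseScale z (opnorm (X - Pm)) < Delta θ) (hi : zh i ≠ φ (z i)) :
    (1 - 4 * (opnorm (X - Pm) / DX.sv (κ - 1)) ^ 2) * Delta θ ≤
      2 * vnorm (projr DXi.U κ *ᵥ fun a => (X - Pm) a i) +
        20 * clusterNoiseScale z (opnorm (X - Pm)) := by
  have hsX : DX.sv κ ≤ opnorm (X - Pm) := by
    simpa [hDP] using (le_abs_self _).trans (DX.abs_sv_sub_sv_le DP κ)
  have hnoise : vnorm (projr DXi.U κ *ᵥ fun a => (X - Pm) a i) =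
      ‖(leadingSpan DXi.leftBasis κ).starProjection
        (euclideanOp (X - Pm) (EuclideanSpace.basisFun (Fin (n + 1)) ℝ i))‖ := by
    rw [vnorm_eq_norm, ← euclideanOp_toLp, DXi.euclideanOp_projr, EuclideanSpace.basisFun_apply,
      euclideanOp_single]
    rfl
  have hkm := hK.isKMeansMinimizer
  rw [DX.euclideanOp_projr] at hkm
  have hm := minClusterSize_pos hτ
  rw [hnoise]
  refine (DX.isSingularPair κ).separation_le_deleted_of_mem_mislabeled (z := z)
    (θ := fun a => WithLp.toLp 2 (θ a)) (DXi.isSingularPair κ) (DX.sv_nonneg κ) hsX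
    (DXi.sv_nonneg κ) ((DX.sv_submatrix_succAbove_le DXi κ).trans hsX) hε hσ ?_
    (euclideanOp_basisFun_eq_center_add hPm) (euclideanOp_submatrix_basisFun X i)
    (euclideanOp_submatrix_basisFun (X - Pm) i) hkm hφ hm (minClusterSize_le z)
    (fun _ _ => Delta_le_norm_sub θ) hτ.le hτΔ ?_
    (Finset.mem_filter.2 ⟨Finset.mem_univ i, hi⟩)
  · rw [finrank_leadingSpan, Fintype.card_fin]
    exact (min_le_right _ _).trans hκ
  · rw [Fintype.card_fin, minClusterSize_mul_clusterNoiseScale_sq hm]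
    rfl

lemma one_sub_mul_inv_add_inv_sq_nonpos {ψ ρ : ℝ} (hψ0 : 0 < ψ) (hρ0 : 0 < ρ)
    (h : ¬(100 < ψ ∧ 10 < ρ)) : 1 - 100 * (ψ⁻¹ + ρ⁻¹ ^ 2) ≤ 0 := by
  rcases not_and_or.1 h with hψ | hρ
  · have hinv : 100⁻¹ ≤ ψ⁻¹ := inv_anti₀ hψ0 (not_lt.1 hψ)
    linarith [sq_nonneg ρ⁻¹]
  · have hinv : 10⁻¹ ^ 2 ≤ ρ⁻¹ ^ 2 := by gcongr; exact not_lt.1 hρ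
    linarith [inv_pos.2 hψ0]

lemma four_mul_div_sq_le_five_mul_inv_sq {ρ ε σ : ℝ} (hε : 0 < ε) (hρ : 10 ≤ ρ)
    (hσ : ρ * ε - ε ≤ σ) : 4 * (ε / σ) ^ 2 ≤ 5 * ρ⁻¹ ^ 2 := by
  have hρε : 10 * ε ≤ ρ * ε := by gcongr
  have hσ' : 9 / 10 * ρ * ε ≤ σ := by linarith
  have hσ0 : 0 < 9 / 10 * ρ * ε := by positivity
  calc 4 * (ε / σ) ^ 2 ≤ 4 * (ε / (9 / 10 * ρ * ε)) ^ 2 := by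
        have hσpos := hσ0.trans_le hσ'
        gcongr
    _ = 400 / 81 * ρ⁻¹ ^ 2 := by field_simp; norm_num
    _ ≤ 5 * ρ⁻¹ ^ 2 := by gcongr; norm_num

lemma one_sub_mul_Delta_le_of_mislabeled (hPm : ∀ a j, Pm a j = θ (z j) a) (hκ : κ ≤ k)
    (DP : SVDData p (n + 1) Pm) (hDP : DP.sv κ = 0) (DX : SVDData p (n + 1) X)
    (i : Fin (n + 1)) (DXi : SVDData p n (X.submatrix id i.succAbove))
    (hK : IsKMeans (projr DX.U κ) X zh c) {φ : Equiv.Perm (Fin k)}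
    (hφ : miscl zh z = (mislabeled zh z φ).card / ((n : ℝ) + 1)) {ρ ψ : ℝ}
    (hρ : ρ = DP.sv (κ - 1) / opnorm (X - Pm))
    (hψ : ψ = Delta θ / clusterNoiseScale z (opnorm (X - Pm))) (hρ0 : 0 < ρ) (hψ0 : 0 < ψ)
    (hi : zh i ≠ φ (z i)) :
    (1 - 100 * (ψ⁻¹ + ρ⁻¹ ^ 2)) * Delta θ ≤
      2 * vnorm (projr DXi.U κ *ᵥ fun a => (X - Pm) a i) := by
  set ε := opnorm (X - Pm)
  set τ := clusterNoiseScale z ε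
  set Nᵢ := vnorm (projr DXi.U κ *ᵥ fun a => (X - Pm) a i)
  have hpos {a b : ℝ} (ha : 0 ≤ a) (hab : 0 < a / b) : 0 < b :=
    not_le.1 fun hb => hab.not_ge (div_nonpos_of_nonneg_of_nonpos ha hb)
  have hε : 0 < ε := hpos (DP.sv_nonneg _) (hρ ▸ hρ0)
  have hτ : 0 < τ := hpos (Delta_nonneg θ) (hψ ▸ hψ0)
  by_cases hlarge : 100 < ψ ∧ 10 < ρ
  swap
  · exact (mul_nonpos_of_nonpos_of_nonneg (one_sub_mul_inv_add_inv_sq_nonpos hψ0 hρ0 hlarge)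
      (Delta_nonneg θ)).trans (mul_nonneg zero_le_two (Real.sqrt_nonneg _))
  have hΔψ : Delta θ = ψ * τ := by rw [hψ, div_mul_cancel₀ _ hτ.ne']
  have hτΔ : τ = ψ⁻¹ * Delta θ := by rw [hΔψ, inv_mul_cancel_left₀ hψ0.ne']
  have hsvP : DP.sv (κ - 1) = ρ * ε := by rw [hρ, div_mul_cancel₀ _ hε.ne']
  have hσ : ρ * ε - ε ≤ DX.sv (κ - 1) := by
    linarith [neg_le_of_abs_le (DX.abs_sv_sub_sv_le DP (κ - 1))]
  have hσ9 : 9 * ε ≤ DX.sv (κ - 1) := by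
    have hρε : 10 * ε ≤ ρ * ε := by gcongr; exact hlarge.2.le
    linarith
  have hratio := four_mul_div_sq_le_five_mul_inv_sq hε hlarge.2.le hσ
  have hcore := Delta_le_of_mislabeled hPm hκ DP hDP DX i DXi hK
    (card_mislabeled_le_of_miscl_eq hφ) hε hσ9 hτ (hΔψ ▸ by gcongr; exact hlarge.1) hi
  calc (1 - 100 * (ψ⁻¹ + ρ⁻¹ ^ 2)) * Delta θ
      ≤ (1 - (20 * ψ⁻¹ + 5 * ρ⁻¹ ^ 2)) * Delta θ := by
        gcongr
        · exact Delta_nonneg θ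
        · linarith [inv_pos.2 hψ0, sq_nonneg ρ⁻¹]
    _ = (1 - 5 * ρ⁻¹ ^ 2) * Delta θ - 20 * τ := by rw [hτΔ]; ring
    _ ≤ (1 - 4 * (ε / DX.sv (κ - 1)) ^ 2) * Delta θ - 20 * τ := by
        gcongr
        exact Delta_nonneg θ
    _ ≤ 2 * Nᵢ := by linarith

end SpectralClustering

section Probability

lemma lintegral_card_le_sum_measure {Ω ι : Type*} [MeasurableSpace Ω] [Fintype ι] (μ : Measure Ω)
    {f : Ω → Finset ι} {s : ι → Set Ω} (h : ∀ ω, ∀ i ∈ f ω, ω ∈ s i) :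
    ∫⁻ ω, (f ω).card ∂μ ≤ ∑ i, μ (s i) :=
  calc ∫⁻ ω, (f ω).card ∂μ
      ≤ ∫⁻ ω, ∑ i, (toMeasurable μ (s i)).indicator 1 ω ∂μ := by
        refine lintegral_mono fun ω => ?_
        calc ((f ω).card : ℝ≥0∞) = ∑ i ∈ f ω, (toMeasurable μ (s i)).indicator 1 ω := by
              rw [Finset.sum_congr rfl fun i hi =>
                Set.indicator_of_mem (subset_toMeasurable μ (s i) (h ω i hi)) 1]
              simp only [Pi.one_apply, Finset.sum_const, nsmul_eq_mul, mul_one]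
          _ ≤ ∑ i, (toMeasurable μ (s i)).indicator 1 ω :=
              Finset.sum_le_sum_of_subset (Finset.subset_univ _)
    _ = ∑ i, μ (s i) := by
        rw [lintegral_finsetSum _ fun i _ =>
          measurable_one.indicator (measurableSet_toMeasurable μ (s i))]
        simp only [lintegral_indicator_one (measurableSet_toMeasurable μ _), measure_toMeasurable]

end Probability

theorem entrywise_decomposition_loo_general {Ω : Type*} [MeasurableSpace Ω] (μ : Measure Ω)
    {p n k : ℕ} {z : Fin (n + 1) → Fin k} {θ : Fin k → Fin p → ℝ}
    {Pm : Matrix (Fin p) (Fin (n + 1)) ℝ} (hPm : ∀ a j, Pm a j = θ (z j) a) {κ : ℕ} (hκ : κ ≤ k)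
    (DP : SVDData p (n + 1) Pm) (hDP : DP.sv κ = 0) {X : Ω → Matrix (Fin p) (Fin (n + 1)) ℝ}
    (DX : ∀ ω, SVDData p (n + 1) (X ω))
    (DXi : ∀ ω (i : Fin (n + 1)), SVDData p n ((X ω).submatrix id i.succAbove))
    {zh : Ω → Fin (n + 1) → Fin k} {c : Ω → Fin k → Fin p → ℝ}
    (hK : ∀ ω, IsKMeans (projr (DX ω).U κ) (X ω) (zh ω) (c ω)) {φ : Ω → Equiv.Perm (Fin k)}
    (hφ : ∀ ω, miscl (zh ω) z = (mislabeled (zh ω) z (φ ω)).card / ((n : ℝ) + 1))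
    {ρ0 ψ0 : Ω → ℝ} (hρ : ∀ ω, ρ0 ω = DP.sv (κ - 1) / opnorm (X ω - Pm))
    (hψ : ∀ ω, ψ0 ω = Delta θ / clusterNoiseScale z (opnorm (X ω - Pm)))
    (hρ0 : ∀ ω, 0 < ρ0 ω) (hψ0 : ∀ ω, 0 < ψ0 ω) :
    (∀ ω i, zh ω i ≠ φ ω (z i) →
      (1 - 100 * ((ψ0 ω)⁻¹ + (ρ0 ω)⁻¹ ^ 2)) * Delta θ ≤
        2 * vnorm (projr (DXi ω i).U κ *ᵥ fun a => (X ω - Pm) a i)) ∧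
    ∫⁻ ω, ENNReal.ofReal (miscl (zh ω) z) ∂μ ≤
      ((n : ℝ≥0∞) + 1)⁻¹ * ∑ i, μ {ω | (1 - 100 * ((ψ0 ω)⁻¹ + (ρ0 ω)⁻¹ ^ 2)) * Delta θ ≤
        2 * vnorm (projr (DXi ω i).U κ *ᵥ fun a => (X ω - Pm) a i)} := by
  have hentry (ω : Ω) (i : Fin (n + 1)) (hi : zh ω i ≠ φ ω (z i)) :=
    one_sub_mul_Delta_le_of_mislabeled hPm hκ DP hDP (DX ω) i (DXi ω i) (hK ω) (hφ ω) (hρ ω) (hψ ω)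
      (hρ0 ω) (hψ0 ω) hi
  refine ⟨hentry, ?_⟩
  have hmiscl (ω : Ω) : ENNReal.ofReal (miscl (zh ω) z) =
      ((n : ℝ≥0∞) + 1)⁻¹ * (mislabeled (zh ω) z (φ ω)).card := by
    rw [hφ ω, ENNReal.ofReal_div_of_pos n.cast_add_one_pos, ENNReal.div_eq_inv_mul,
      ENNReal.ofReal_natCast, ← Nat.cast_add_one, ENNReal.ofReal_natCast, Nat.cast_add_one]
  simp only [hmiscl]
  rw [lintegral_const_mul' _ _ (ENNReal.inv_ne_top.2 (by positivity))]
  gcongr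
  exact lintegral_card_le_sum_measure μ fun ω i hi => hentry ω i (Finset.mem_filter.1 hi).2

/-- **Lemma 2 (leave-one-out entrywise error decomposition).**
There is a universal constant `C > 0` such that for the spectral clustering with `r = κ`
components under `βn/k² ≥ 10`, `ρ₀ := λ_κ/‖E‖ > 16` and `ψ₀ ≥ 16` (for every realization),
one has for every `ω` and every `i`,
`𝟙{ẑ_i ≠ φ(z*_i)} ≤ 𝟙{(1 − C(ψ₀⁻¹ + ρ₀⁻²))Δ ≤ 2‖Û_{−i,1:κ}Û_{−i,1:κ}ᵀ ε_i‖}`;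
consequently `E ℓ(ẑ,z*) ≤ n⁻¹ Σ_i P((1 − C(ψ₀⁻¹ + ρ₀⁻²))Δ ≤ 2‖Û_{−i,1:κ}Û_{−i,1:κ}ᵀ ε_i‖)`. -/
theorem entrywise_decomposition_loo :
    ∃ C : ℝ, 0 < C ∧
      ∀ (Ω : Type) (mΩ : MeasurableSpace Ω) (μ : Measure Ω), IsProbabilityMeasure μ →
      ∀ (p n k : ℕ) (z : Fin (n + 1) → Fin k) (θ : Fin k → Fin p → ℝ)
        (Pm : Matrix (Fin p) (Fin (n + 1)) ℝ), (∀ a j, Pm a j = θ (z j) a) →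
      ∀ κ : ℕ, 0 < κ → κ ≤ k →
      ∀ DP : SVDData p (n + 1) Pm, 0 < DP.sv (κ - 1) → DP.sv κ = 0 →
      10 ≤ betaMin (n + 1) k z * ((n : ℝ) + 1) / (k : ℝ) ^ 2 →
      ∀ (X : Ω → Matrix (Fin p) (Fin (n + 1)) ℝ)
        (DX : ∀ ω, SVDData p (n + 1) (X ω))
        (DXi : ∀ ω (i : Fin (n + 1)), SVDData p n ((X ω).submatrix id i.succAbove))
        (zh : Ω → Fin (n + 1) → Fin k) (c : Ω → Fin k → Fin p → ℝ),
        (∀ ω, IsKMeans (projr (DX ω).U κ) (X ω) (zh ω) (c ω)) →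
      ∀ φ : Ω → Equiv.Perm (Fin k),
        (∀ ω, miscl (zh ω) z =
          ((Finset.univ.filter fun i => zh ω i ≠ (φ ω) (z i)).card : ℝ) / ((n : ℝ) + 1)) →
      ∀ ρ0 ψ0 : Ω → ℝ,
        (∀ ω, ρ0 ω = DP.sv (κ - 1) / opnorm (X ω - Pm)) →
        (∀ ω, ψ0 ω = Delta θ / ((Real.sqrt (betaMin (n + 1) k z))⁻¹ * (k : ℝ) *
            (Real.sqrt ((n : ℝ) + 1))⁻¹ * opnorm (X ω - Pm))) →
        (∀ ω, 16 < ρ0 ω) → (∀ ω, 16 ≤ ψ0 ω) →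
        (∀ ω i, zh ω i ≠ (φ ω) (z i) →
          (1 - C * ((ψ0 ω)⁻¹ + ((ρ0 ω)⁻¹) ^ 2)) * Delta θ ≤
            2 * vnorm ((projr (DXi ω i).U κ).mulVec fun a => (X ω - Pm) a i)) ∧
        ∫⁻ ω, ENNReal.ofReal (miscl (zh ω) z) ∂μ ≤
          ((n : ℝ≥0∞) + 1)⁻¹ * ∑ i : Fin (n + 1),
            μ {ω | (1 - C * ((ψ0 ω)⁻¹ + ((ρ0 ω)⁻¹) ^ 2)) * Delta θ ≤
              2 * vnorm ((projr (DXi ω i).U κ).mulVec fun a => (X ω - Pm) a i)} := by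
  refine ⟨100, by norm_num, ?_⟩
  intro Ω _ μ _ p n k z θ Pm hPm κ _ hκ DP _ hDP _ X DX DXi zh c hK φ hφ ρ0 ψ0 hρ hψ hρ0 hψ0
  exact entrywise_decomposition_loo_general μ hPm hκ DP hDP DX DXi hK hφ hρ hψ
    (fun ω => by linarith [hρ0 ω]) fun ω => by linarith [hψ0 ω]
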